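/- Let S be a recurrent strongly aperiodic random walk on ℤ with 1−φ(θ) ~ c₀e^{±iπγ/2}|θ|^α (θ→±0), 1<α<2, |γ| ≤ 2−α. Let f⁰(n) = P[σ^0_{{0}} = n] be the probability that the walk returns to 0 for the first time at step n. Then f⁰(n) ~ κ_{α,γ}·c₀^{1/α}·n^{−2+1/α} as n → ∞, where κ_{α,γ} = (α−1)·sin(π/α)/(Γ(1/α)·sin(π(α−γ)/(2α))). -/

import Mathlib

/-!
Write `U_k(z) = ∫ φ^k / (1 - z φ)^(k+1)` over `[-π, π]`, so that `U_k' = (k + 1) U_{k+1}`. Fourier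
inversion gives `∑ pₙ(0) zⁿ = U₀ / 2π`, and the renewal equation turns this into
`∑ f⁰(n) zⁿ = 1 - 2π / U₀`.

Since `1 - φ` is sectorial, `|1 - z φ(θ)|` is bounded below by a multiple of `|1 - z| + |θ|^α`
uniformly in the unit disc. The substitution `θ = |1 - z|^(1/α) t` and dominated convergence
therefore replace `1 - z φ(θ)` by its homogeneous model `1 - z + c± |θ|^α`, whose integrals are
explicit: `U_k(z) ~ C_k (1 - z)^(1/α - k - 1)` as `z → 1` in the disc.

The generating function of `f⁰` stays bounded at `z = 1`, so its singularity is invisible to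
Cauchy's estimate; its second derivative is `~ D (1 - z)^(-1 - 1/α)`. Subtracting the binomial
series of `D (1 - z)^(-1 - 1/α)` and applying Cauchy's estimate to the remainder on a circle at
distance `1 / (n + 1)` from the boundary yields the asymptotics of the coefficients
`(n + 1) (n + 2) f⁰(n + 2)`. Euler's reflection formula brings the constant into the form `κ_{α,γ}`.
-/

open Filter Topology Asymptotics

/-- `pn p n x` is the `n`-step transition probability `P[S_n = x]`. -/
noncomputable def pn (p : ℤ → ℝ) : ℕ → ℤ → ℝ
  | 0, x => if x = 0 then 1 else 0
  | n + 1, x => ∑' y : ℤ, pn p n y * p (x - y)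

/-- The characteristic function `φ(θ) = Σ_x p(x) e^{iθx}`. -/
noncomputable def rwChar (p : ℤ → ℝ) (θ : ℝ) : ℂ :=
  ∑' x : ℤ, (p x : ℂ) * Complex.exp (Complex.I * θ * x)

/-- `pk p B n x y = P[x + S_n = y, σ^x_B > n]`: the walk killed on `B`. -/
noncomputable def pk (p : ℤ → ℝ) (B : Set ℤ) : ℕ → ℤ → ℤ → ℝ
  | 0, x, y => if x = y then 1 else 0
  | n + 1, x, y => Set.indicator Bᶜ (fun w => ∑' z : ℤ, pk p B n x z * p (w - z)) y

/-- `f⁰(n) = P[σ^0_{{0}} = n]`: the probability that the walk started at `0`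
returns to `0` for the first time at step `n`. -/
noncomputable def firstReturn (p : ℤ → ℝ) : ℕ → ℝ
  | 0 => 0
  | n + 1 => ∑' z : ℤ, pk p {0} n 0 z * p (0 - z)

open MeasureTheory
open scoped Real

theorem tendsto_smul_integral_of_rescaled_dominated {ι E : Type*} [NormedAddCommGroup E]
    [NormedSpace ℝ E] {l : Filter ι} [l.IsCountablyGenerated] {G : ι → ℝ → E} {δ c : ι → ℝ}
    {bound : ℝ → ℝ} (hδ : ∀ᶠ i in l, 0 < δ i) (hbound : Integrable bound)
    (hG : ∀ᶠ i in l, StronglyMeasurable (G i))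
    (hle : ∀ᶠ i in l, ∀ t, ‖c i • G i (δ i * t)‖ ≤ bound t)
    (hlim : ∀ᵐ t, Tendsto (fun i => c i • G i (δ i * t)) l (𝓝 0)) :
    Tendsto (fun i => (c i / δ i) • ∫ t, G i t) l (𝓝 0) := by
  have hmeas : ∀ᶠ i in l, AEStronglyMeasurable fun t => c i • G i (δ i * t) :=
    hG.mono fun i hi =>
      ((hi.comp_measurable (measurable_const_mul _)).const_smul _).aestronglyMeasurable
  have hint := tendsto_integral_filter_of_dominated_convergence bound hmeas
    (hle.mono fun i hi => ae_of_all _ hi) hbound hlim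
  rw [integral_zero] at hint
  refine hint.congr' (hδ.mono fun i hi => ?_)
  simp only [integral_smul, Measure.integral_comp_mul_left, smul_smul, abs_of_pos (inv_pos.2 hi),
    div_eq_mul_inv]

section PowerSeries

variable {h : ℕ → ℂ} {H : ℂ → ℂ}

theorem hasFPowerSeriesOnBall_ofScalars_of_hasSum
    (hs : ∀ z : ℂ, ‖z‖ < 1 → HasSum (fun n => h n * z ^ n) (H z)) :
    HasFPowerSeriesOnBall H (FormalMultilinearSeries.ofScalars ℂ h) 0 1 where
  r_le := by
    refine ENNReal.le_of_forall_nnreal_lt fun r hr => ?_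
    refine FormalMultilinearSeries.le_radius_of_summable_norm _ ?_
    have := (hs r (by simpa using hr)).summable.norm
    simpa [FormalMultilinearSeries.ofScalars_norm] using this
  r_pos := one_pos
  hasSum {z} hz := by
    have hz : ‖z‖ < 1 := by simpa [enorm_eq_nnnorm, ← NNReal.coe_lt_coe] using hz
    simpa [FormalMultilinearSeries.ofScalars_apply_eq, mul_comm] using hs z hz

theorem differentiableOn_ball_of_hasSum
    (hs : ∀ z : ℂ, ‖z‖ < 1 → HasSum (fun n => h n * z ^ n) (H z)) :
    DifferentiableOn ℂ H (Metric.ball 0 1) := by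
  have := (hasFPowerSeriesOnBall_ofScalars_of_hasSum hs).differentiableOn
  rwa [← ENNReal.ofReal_one, Metric.eball_ofReal] at this

theorem hasSum_deriv_of_hasSum {H' : ℂ → ℂ}
    (hs : ∀ z : ℂ, ‖z‖ < 1 → HasSum (fun n => h n * z ^ n) (H z))
    (hd : ∀ z : ℂ, ‖z‖ < 1 → HasDerivAt H (H' z) z) {z : ℂ} (hz : ‖z‖ < 1) :
    HasSum (fun n : ℕ => ((n + 1 : ℂ) * h (n + 1)) * z ^ n) (H' z) := by
  have hfderiv := (hasFPowerSeriesOnBall_ofScalars_of_hasSum hs).fderiv.hasSum (y := z)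
    (by simpa [enorm_eq_nnnorm, ← NNReal.coe_lt_coe] using hz)
  have hderiv := hfderiv.mapL (ContinuousLinearMap.apply ℂ ℂ (1 : ℂ))
  simpa [FormalMultilinearSeries.apply_eq_pow_smul_coeff,
    FormalMultilinearSeries.coeff_ofScalars, (hd z hz).deriv, mul_comm] using hderiv

theorem norm_coeff_le_integral_norm_circleMap
    (hs : ∀ z : ℂ, ‖z‖ < 1 → HasSum (fun n => h n * z ^ n) (H z))
    {r : ℝ} (hr0 : 0 < r) (hr1 : r < 1) (n : ℕ) :
    ‖h n‖ ≤ ((2 * π)⁻¹ * ∫ θ in (-π)..π, ‖H (circleMap 0 r θ)‖) * r⁻¹ ^ n := by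
  lift r to NNReal using hr0.le
  have hcont : DiffContOnCl ℂ H (Metric.ball 0 r) := by
    refine ((differentiableOn_ball_of_hasSum hs).mono ?_).diffContOnCl
    rw [closure_ball _ hr0.ne']
    exact Metric.closedBall_subset_ball hr1
  have hunique := (hcont.hasFPowerSeriesOnBall (mod_cast hr0)).hasFPowerSeriesAt
    |>.eq_formalMultilinearSeries
      (hasFPowerSeriesOnBall_ofScalars_of_hasSum hs).hasFPowerSeriesAt
  have hcauchy := norm_cauchyPowerSeries_le H 0 r n
  rw [hunique, FormalMultilinearSeries.norm_apply_eq_norm_coef,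
    FormalMultilinearSeries.coeff_ofScalars, abs_of_pos hr0] at hcauchy
  have hperiodic : Function.Periodic (fun θ => ‖H (circleMap 0 r θ)‖) (2 * π) := fun θ => by
    simp only [periodic_circleMap 0 r θ]
  have hshift := hperiodic.intervalIntegral_add_eq 0 (-π)
  rw [zero_add, show -π + 2 * π = π by ring] at hshift
  rwa [hshift] at hcauchy

end PowerSeries

theorem norm_one_sub_circleMap_ge {r τ : ℝ} (hr : 1 / 2 ≤ r) (hτ : |τ| ≤ π) :
    (1 - r + |τ|) / 4 ≤ ‖1 - circleMap 0 r τ‖ := by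
  have hsq : ‖1 - circleMap 0 r τ‖ ^ 2 = (1 - r) ^ 2 + 2 * r * (1 - Real.cos τ) := by
    rw [← Complex.normSq_eq_norm_sq, Complex.normSq_apply]
    simp only [circleMap, zero_add, Complex.sub_re, Complex.one_re, Complex.sub_im, Complex.one_im,
      Complex.re_ofReal_mul, Complex.im_ofReal_mul, Complex.exp_ofReal_mul_I_re,
      Complex.exp_ofReal_mul_I_im]
    linear_combination r ^ 2 * Real.sin_sq_add_cos_sq τ
  have hpi : 1 / 8 ≤ 2 / π ^ 2 := by
    rw [div_le_div_iff₀ (by norm_num) (by positivity)]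
    nlinarith [Real.pi_lt_four, Real.pi_pos]
  have hcos : τ ^ 2 / 8 ≤ 1 - Real.cos τ := by
    nlinarith [Real.cos_le_one_sub_mul_cos_sq hτ, sq_nonneg τ]
  refine (abs_le_of_sq_le_sq' ?_ (norm_nonneg _)).2
  rw [hsq]
  nlinarith [sq_nonneg (1 - r - |τ|), sq_abs τ, Real.cos_le_one τ]

section Transfer

variable {h : ℕ → ℂ} {H : ℂ → ℂ} {a : ℝ}

theorem exists_norm_le_rpow_neg (ha : 0 ≤ a)
    (hlim : Tendsto (fun z => H z * (1 - z) ^ (a : ℂ)) (𝓝[Metric.ball 0 1] 1) (𝓝 0))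
    (hbdd : ∀ δ > 0, ∃ K, ∀ z : ℂ, ‖z‖ < 1 → δ ≤ ‖1 - z‖ → ‖H z‖ ≤ K) :
    ∃ C, 0 ≤ C ∧ ∀ z : ℂ, ‖z‖ < 1 → ‖H z‖ ≤ C * ‖1 - z‖ ^ (-a) := by
  have hnear : ∀ᶠ z in 𝓝[Metric.ball 0 1] (1 : ℂ), ‖H z * (1 - z) ^ (a : ℂ)‖ < 1 := by
    simpa using hlim.norm.eventually (gt_mem_nhds (by simp : ‖(0 : ℂ)‖ < 1))
  obtain ⟨δ, hδ, hδnear⟩ := Metric.mem_nhdsWithin_iff.1 hnear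
  obtain ⟨K, hK⟩ := hbdd δ hδ
  refine ⟨max 1 (K * 2 ^ a), by positivity, fun z hz => ?_⟩
  have hz1 : 1 - z ≠ 0 := sub_ne_zero.2 fun h1 => by simp [← h1] at hz
  have hpos : 0 < ‖1 - z‖ := norm_pos_iff.2 hz1
  rw [Real.rpow_neg hpos.le, ← div_eq_mul_inv, le_div_iff₀ (by positivity)]
  rcases lt_or_ge ‖1 - z‖ δ with hzδ | hzδ
  · refine le_max_of_le_left ?_
    have hmem : z ∈ Metric.ball (1 : ℂ) δ ∩ Metric.ball 0 1 :=
      ⟨by rwa [Metric.mem_ball, dist_comm, dist_eq_norm], by simpa using hz⟩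
    have hlt : ‖H z * (1 - z) ^ (a : ℂ)‖ < 1 := hδnear hmem
    rw [norm_mul, Complex.norm_cpow_real] at hlt
    exact hlt.le
  · refine le_max_of_le_right ?_
    have htwo : ‖1 - z‖ ≤ 2 := (norm_sub_le _ _).trans (by rw [norm_one]; linarith)
    have := (norm_nonneg _).trans (hK z hz hzδ)
    gcongr
    exact hK z hz hzδ

/-- The radius `n / (n + 1)` of the circle on which Cauchy's estimate for the `n`-th coefficient is
applied. -/
noncomputable def cauchyRadius (n : ℕ) : ℝ := n / (n + 1)

theorem one_sub_cauchyRadius (n : ℕ) : 1 - cauchyRadius n = (n + 1 : ℝ)⁻¹ := by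
  rw [cauchyRadius]
  field_simp
  ring

theorem cauchyRadius_lt_one (n : ℕ) : cauchyRadius n < 1 := by
  have : 0 < (n + 1 : ℝ)⁻¹ := by positivity
  linarith [one_sub_cauchyRadius n]

theorem half_le_cauchyRadius {n : ℕ} (hn : 1 ≤ n) : 1 / 2 ≤ cauchyRadius n := by
  have : (1 : ℝ) ≤ n := mod_cast hn
  rw [cauchyRadius, div_le_div_iff₀ (by norm_num) (by positivity)]
  linarith

theorem inv_cauchyRadius_pow_le {n : ℕ} (hn : 1 ≤ n) : (cauchyRadius n)⁻¹ ^ n ≤ Real.exp 1 := by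
  have : (1 : ℝ) ≤ n := mod_cast hn
  calc (cauchyRadius n)⁻¹ ^ n = (1 / n + 1) ^ n := by
        rw [cauchyRadius, inv_div, add_div, div_self (by positivity), add_comm]
    _ ≤ Real.exp (1 / n) ^ n := by
        gcongr
        exact Real.add_one_le_exp _
    _ = Real.exp 1 := by
        rw [← Real.exp_nat_mul]
        field_simp

theorem norm_circleMap_cauchyRadius_lt_one (n : ℕ) (τ : ℝ) :
    ‖circleMap 0 (cauchyRadius n) τ‖ < 1 := by
  rw [norm_circleMap_zero, abs_of_nonneg (by rw [cauchyRadius]; positivity)]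
  exact cauchyRadius_lt_one n

theorem norm_one_sub_circleMap_cauchyRadius_ge {n : ℕ} (hn : 1 ≤ n) {t : ℝ}
    (ht : |(n + 1 : ℝ)⁻¹ * t| ≤ π) :
    (n + 1 : ℝ)⁻¹ * (1 + ‖t‖) / 4 ≤
      ‖1 - circleMap 0 (cauchyRadius n) ((n + 1 : ℝ)⁻¹ * t)‖ := by
  refine le_trans (le_of_eq ?_) (norm_one_sub_circleMap_ge (half_le_cauchyRadius hn) ht)
  rw [one_sub_cauchyRadius, abs_mul, abs_of_pos (by positivity : (0 : ℝ) < (n + 1 : ℝ)⁻¹),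
    Real.norm_eq_abs]
  ring

theorem rpow_mul_norm_circleMap_le {C : ℝ} (hC : 0 ≤ C) (ha : 0 ≤ a)
    (hle : ∀ z : ℂ, ‖z‖ < 1 → ‖H z‖ ≤ C * ‖1 - z‖ ^ (-a)) {n : ℕ} (hn : 1 ≤ n) {t : ℝ}
    (ht : |(n + 1 : ℝ)⁻¹ * t| ≤ π) :
    (n + 1 : ℝ)⁻¹ ^ a * ‖H (circleMap 0 (cauchyRadius n) ((n + 1 : ℝ)⁻¹ * t))‖ ≤
      C * 4 ^ a * (1 + ‖t‖) ^ (-a) := by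
  have hdist := norm_one_sub_circleMap_cauchyRadius_ge hn ht
  set δ : ℝ := (n + 1 : ℝ)⁻¹
  have hδ : 0 < δ := by positivity
  calc _ ≤ δ ^ a * (C * ‖1 - circleMap 0 (cauchyRadius n) (δ * t)‖ ^ (-a)) := by
        gcongr
        exact hle _ (norm_circleMap_cauchyRadius_lt_one n _)
    _ ≤ δ ^ a * (C * (δ * (1 + ‖t‖) / 4) ^ (-a)) := by
        gcongr ?_ * (?_ * ?_)
        exact Real.rpow_le_rpow_of_nonpos (by positivity) hdist (by linarith)
    _ = C * 4 ^ a * (1 + ‖t‖) ^ (-a) := by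
        rw [Real.div_rpow (by positivity) (by norm_num), Real.mul_rpow hδ.le (by positivity),
          Real.rpow_neg hδ.le, Real.rpow_neg (by norm_num : (0 : ℝ) ≤ 4)]
        have := (Real.rpow_pos_of_pos hδ a).ne'
        field_simp

theorem rpow_mul_norm_circleMap_le_of_norm_mul (ha : 0 ≤ a) {n : ℕ} (hn : 1 ≤ n) {t : ℝ}
    (ht : |(n + 1 : ℝ)⁻¹ * t| ≤ π) {z : ℂ}
    (hz : z = circleMap 0 (cauchyRadius n) ((n + 1 : ℝ)⁻¹ * t)) :
    (n + 1 : ℝ)⁻¹ ^ a * ‖H z‖ ≤ 4 ^ a * ‖H z * (1 - z) ^ (a : ℂ)‖ := by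
  have hdist : (n + 1 : ℝ)⁻¹ ≤ 4 * ‖1 - z‖ := by
    have hge := norm_one_sub_circleMap_cauchyRadius_ge hn ht
    have : 0 ≤ (n + 1 : ℝ)⁻¹ * ‖t‖ := by positivity
    rw [hz]
    linarith
  calc (n + 1 : ℝ)⁻¹ ^ a * ‖H z‖ ≤ (4 * ‖1 - z‖) ^ a * ‖H z‖ := by gcongr
    _ = 4 ^ a * ‖H z * (1 - z) ^ (a : ℂ)‖ := by
        rw [Real.mul_rpow (by norm_num) (norm_nonneg _), norm_mul, Complex.norm_cpow_real]
        ring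

theorem tendsto_inv_natCast_add_one : Tendsto (fun n : ℕ => (n + 1 : ℝ)⁻¹) atTop (𝓝 0) := by
  simpa only [one_div] using tendsto_one_div_add_atTop_nhds_zero_nat (𝕜 := ℝ)

theorem tendsto_circleMap_cauchyRadius (t : ℝ) :
    Tendsto (fun n : ℕ => circleMap 0 (cauchyRadius n) ((n + 1 : ℝ)⁻¹ * t)) atTop
      (𝓝[Metric.ball 0 1] 1) := by
  refine tendsto_nhdsWithin_iff.2 ⟨?_, Eventually.of_forall fun n => ?_⟩
  · have hradius : Tendsto cauchyRadius atTop (𝓝 1) := by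
      simpa only [← one_sub_cauchyRadius, sub_sub_cancel, sub_zero] using
        tendsto_inv_natCast_add_one.const_sub 1
    have hangle := tendsto_inv_natCast_add_one.mul_const t
    have hmap : Continuous fun q : ℝ × ℝ => circleMap 0 q.1 q.2 := by
      unfold circleMap
      fun_prop
    have hcomp := (hmap.tendsto (1, 0 * t)).comp (hradius.prodMk_nhds hangle)
    rwa [show circleMap 0 1 (0 * t) = 1 by simp [circleMap]] at hcomp
  · simpa using norm_circleMap_cauchyRadius_lt_one n 0

theorem tendsto_integral_norm_circleMap_div_rpow (ha : 1 < a)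
    (hcont : ContinuousOn H (Metric.ball 0 1))
    (hlim : Tendsto (fun z => H z * (1 - z) ^ (a : ℂ)) (𝓝[Metric.ball 0 1] 1) (𝓝 0))
    (hbdd : ∀ δ > 0, ∃ K, ∀ z : ℂ, ‖z‖ < 1 → δ ≤ ‖1 - z‖ → ‖H z‖ ≤ K) :
    Tendsto (fun n : ℕ => (∫ θ in (-π)..π, ‖H (circleMap 0 (cauchyRadius n) θ)‖) /
      (n + 1 : ℝ) ^ (a - 1)) atTop (𝓝 0) := by
  obtain ⟨C, hC, hle⟩ := exists_norm_le_rpow_neg (by linarith) hlim hbdd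
  have hcontCircle (n : ℕ) : Continuous fun θ => ‖H (circleMap 0 (cauchyRadius n) θ)‖ :=
    (hcont.comp_continuous (continuous_circleMap _ _) fun θ => by
      simpa using norm_circleMap_cauchyRadius_lt_one n θ).norm
  have hbound : Integrable fun t : ℝ => C * 4 ^ a * (1 + ‖t‖) ^ (-a) :=
    (integrable_one_add_norm (by simpa using ha)).const_mul _
  have hmem {x : ℝ} (hx : x ∈ Set.Ioc (-π) π) : |x| ≤ π := abs_le.2 ⟨hx.1.le, hx.2⟩
  have hrescaled := tendsto_smul_integral_of_rescaled_dominated (l := atTop)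
    (G := fun n : ℕ => (Set.Ioc (-π) π).indicator
      fun θ => ‖H (circleMap 0 (cauchyRadius n) θ)‖)
    (δ := fun n : ℕ => (n + 1 : ℝ)⁻¹) (c := fun n : ℕ => (n + 1 : ℝ)⁻¹ ^ a)
    (Eventually.of_forall fun n : ℕ => by positivity) hbound
    (Eventually.of_forall fun n => (hcontCircle n).stronglyMeasurable.indicator measurableSet_Ioc)
    ((eventually_ge_atTop 1).mono fun n hn t => ?_) (ae_of_all _ fun t => ?_)
  · refine hrescaled.congr fun n => ?_
    rw [integral_indicator measurableSet_Ioc, smul_eq_mul,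
      ← intervalIntegral.integral_of_le (neg_le_self Real.pi_pos.le), Real.inv_rpow (by positivity),
      inv_div_inv, Real.rpow_sub_one (by positivity), div_div_eq_mul_div]
    ring
  · rw [norm_smul, Real.norm_of_nonneg (by positivity), norm_indicator_eq_indicator_norm]
    by_cases ht : (n + 1 : ℝ)⁻¹ * t ∈ Set.Ioc (-π) π
    · simpa only [Set.indicator_of_mem ht, norm_norm] using
        rpow_mul_norm_circleMap_le hC (by linarith) hle hn (hmem ht)
    · rw [Set.indicator_of_notMem ht, mul_zero]
      positivity
  · have hlimCircle := ((hlim.comp (tendsto_circleMap_cauchyRadius t)).norm).const_mul (4 ^ a)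
    rw [norm_zero, mul_zero] at hlimCircle
    refine squeeze_zero' (Eventually.of_forall fun n => ?_)
      ((eventually_ge_atTop 1).mono fun n hn => ?_) hlimCircle
    · exact smul_nonneg (by positivity) (Set.indicator_nonneg (fun _ _ => norm_nonneg _) _)
    · rw [smul_eq_mul, Function.comp_apply]
      by_cases ht : (n + 1 : ℝ)⁻¹ * t ∈ Set.Ioc (-π) π
      · rw [Set.indicator_of_mem ht]
        exact rpow_mul_norm_circleMap_le_of_norm_mul (by linarith) hn (hmem ht) rfl
      · rw [Set.indicator_of_notMem ht, mul_zero]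
        positivity

theorem isLittleO_coeff_rpow (ha : 1 < a)
    (hs : ∀ z : ℂ, ‖z‖ < 1 → HasSum (fun n => h n * z ^ n) (H z))
    (hlim : Tendsto (fun z => H z * (1 - z) ^ (a : ℂ)) (𝓝[Metric.ball 0 1] 1) (𝓝 0))
    (hbdd : ∀ δ > 0, ∃ K, ∀ z : ℂ, ‖z‖ < 1 → δ ≤ ‖1 - z‖ → ‖H z‖ ≤ K) :
    h =o[atTop] fun n : ℕ => (n : ℝ) ^ (a - 1) := by
  have hint := (tendsto_integral_norm_circleMap_div_rpow ha
    (differentiableOn_ball_of_hasSum hs).continuousOn hlim hbdd).const_mul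
      ((2 * π)⁻¹ * Real.exp 1)
  rw [mul_zero] at hint
  have hsucc : h =o[atTop] fun n : ℕ => (n + 1 : ℝ) ^ (a - 1) := by
    refine IsLittleO.of_norm_left
      ((isLittleO_iff_tendsto fun n hn => absurd hn (by positivity)).2 ?_)
    refine squeeze_zero' (.of_forall fun n => by positivity)
      ((eventually_ge_atTop 1).mono fun n hn => ?_) hint
    have hradius : 0 < cauchyRadius n := by linarith [half_le_cauchyRadius hn]
    rw [← mul_div_assoc]
    gcongr
    refine (norm_coeff_le_integral_norm_circleMap hs hradius (cauchyRadius_lt_one n) n).trans ?_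
    rw [mul_right_comm]
    have : 0 ≤ ∫ θ in (-π)..π, ‖H (circleMap 0 (cauchyRadius n) θ)‖ :=
      intervalIntegral.integral_nonneg (neg_le_self Real.pi_pos.le) fun _ _ => norm_nonneg _
    gcongr
    exact inv_cauchyRadius_pow_le hn
  refine hsucc.trans_isBigO (.of_bound (2 ^ (a - 1)) ((eventually_ge_atTop 1).mono fun n hn => ?_))
  have : (1 : ℝ) ≤ n := mod_cast hn
  rw [Real.norm_of_nonneg (by positivity), Real.norm_of_nonneg (by positivity),
    ← Real.mul_rpow (by norm_num) (by positivity)]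
  gcongr
  linarith

end Transfer

section Binomial

/-- The coefficient `a (a + 1) ⋯ (a + n - 1) / n!` of `z ^ n` in the binomial series of
`(1 - z) ^ (-a)`. -/
noncomputable def negBinomialCoeff (a : ℝ) (n : ℕ) : ℝ :=
  (∏ j ∈ Finset.range n, (a + j)) / n.factorial

theorem choose_add_sub_one_eq_negBinomialCoeff (a : ℝ) (n : ℕ) :
    Ring.choose ((a : ℂ) + n - 1) n = negBinomialCoeff a n := by
  have hprod : (ascPochhammer ℂ n).eval (a : ℂ) = ∏ j ∈ Finset.range n, ((a : ℂ) + j) := by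
    induction n with
    | zero => simp
    | succ n ih => rw [ascPochhammer_succ_eval, ih, Finset.prod_range_succ]
  have hpoch := Ring.factorial_nsmul_multichoose_eq_ascPochhammer (a : ℂ) n
  rw [Ring.multichoose_eq, Polynomial.ascPochhammer_smeval_eq_eval, nsmul_eq_mul, hprod] at hpoch
  rw [negBinomialCoeff]
  push_cast
  rw [← hpoch, mul_div_cancel_left₀ _ (mod_cast n.factorial_ne_zero)]

theorem hasSum_negBinomialCoeff_mul_pow (a : ℝ) {z : ℂ} (hz : ‖z‖ < 1) :
    HasSum (fun n => (negBinomialCoeff a n : ℂ) * z ^ n) ((1 - z) ^ (-a : ℂ)) := by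
  have hbinom := (Complex.one_div_one_sub_cpow_hasFPowerSeriesOnBall_zero (a : ℂ)).hasSum (y := z)
    (by simpa [enorm_eq_nnnorm, ← NNReal.coe_lt_coe] using hz)
  simpa [FormalMultilinearSeries.ofScalars_apply_eq, choose_add_sub_one_eq_negBinomialCoeff,
    Complex.cpow_neg, mul_comm] using hbinom

theorem tendsto_negBinomialCoeff_div_rpow {a : ℝ} (ha : 0 < a) :
    Tendsto (fun n : ℕ => negBinomialCoeff a n / (n : ℝ) ^ (a - 1)) atTop
      (𝓝 (Real.Gamma a)⁻¹) := by
  have hgamma := (Real.GammaSeq_tendsto_Gamma a).inv₀ (Real.Gamma_pos_of_pos ha).ne'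
  have hratio : Tendsto (fun n : ℕ => (n : ℝ) / (n + a)) atTop (𝓝 1) :=
    tendsto_natCast_div_add_atTop a
  rw [← one_mul (Real.Gamma a)⁻¹]
  refine (hratio.mul hgamma).congr' ((eventually_gt_atTop 0).mono fun n hn => ?_)
  have hnpos : (0 : ℝ) < n := mod_cast hn
  have : 0 < ∏ j ∈ Finset.range n, (a + (j : ℝ)) := Finset.prod_pos fun j _ => by positivity
  simp only [negBinomialCoeff, Real.GammaSeq]
  rw [Finset.prod_range_succ, Real.rpow_sub_one hnpos.ne',
    inv_div, add_comm (n : ℝ) a]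
  field_simp

end Binomial

theorem tendsto_coeff_div_rpow {h : ℕ → ℂ} {H : ℂ → ℂ} {a : ℝ} {D : ℂ} (ha : 1 < a)
    (hs : ∀ z : ℂ, ‖z‖ < 1 → HasSum (fun n => h n * z ^ n) (H z))
    (hlim : Tendsto (fun z => H z * (1 - z) ^ (a : ℂ)) (𝓝[Metric.ball 0 1] 1) (𝓝 D))
    (hbdd : ∀ δ > 0, ∃ K, ∀ z : ℂ, ‖z‖ < 1 → δ ≤ ‖1 - z‖ → ‖H z‖ ≤ K) :
    Tendsto (fun n : ℕ => h n / ((n : ℝ) ^ (a - 1) : ℝ)) atTop (𝓝 (D / Real.Gamma a)) := by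
  have hne {z : ℂ} (hz : ‖z‖ < 1) : 1 - z ≠ 0 := sub_ne_zero.2 fun h1 => by simp [← h1] at hz
  have hrem : (fun n => h n - D * negBinomialCoeff a n) =o[atTop]
      fun n : ℕ => (n : ℝ) ^ (a - 1) := by
    refine isLittleO_coeff_rpow (H := fun z => H z - D * (1 - z) ^ (-a : ℂ)) ha (fun z hz => ?_)
      ?_ fun δ hδ => ?_
    · refine ((hs z hz).sub ((hasSum_negBinomialCoeff_mul_pow a hz).mul_left D)).congr_fun ?_
      exact fun n => by ring
    · have hsub := hlim.sub_const D
      rw [sub_self] at hsub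
      refine hsub.congr' (eventually_mem_nhdsWithin.mono fun z hz => ?_)
      have hpow : (1 - z) ^ (-a : ℂ) * (1 - z) ^ (a : ℂ) = 1 := by
        rw [← Complex.cpow_add _ _ (hne (by simpa using hz)), neg_add_cancel, Complex.cpow_zero]
      linear_combination D * hpow
    · obtain ⟨K, hK⟩ := hbdd δ hδ
      refine ⟨K + ‖D‖ * δ ^ (-a), fun z hz hzδ => (norm_sub_le _ _).trans ?_⟩
      rw [norm_mul, ← Complex.ofReal_neg, Complex.norm_cpow_real]
      exact add_le_add (hK z hz hzδ) (mul_le_mul_of_nonneg_left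
        (Real.rpow_le_rpow_of_nonpos hδ hzδ (by linarith)) (norm_nonneg D))
  have hmain := (tendsto_negBinomialCoeff_div_rpow (by linarith : 0 < a)).ofReal.const_mul D
  have hsmall : Tendsto (fun n : ℕ => (h n - D * negBinomialCoeff a n) / ((n : ℝ) ^ (a - 1) : ℝ))
      atTop (𝓝 0) :=
    (Complex.isLittleO_ofReal_right.2 hrem).tendsto_div_nhds_zero
  have hsum := hsmall.add hmain
  rw [zero_add, Complex.ofReal_inv, ← div_eq_mul_inv] at hsum
  refine hsum.congr fun n => ?_
  push_cast
  ring

theorem integrableOn_cpow_mul_exp_neg_mul_Ioi {a r : ℂ} (ha : 0 < a.re) (hr : 0 < r.re) :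
    IntegrableOn (fun t : ℝ => (t : ℂ) ^ (a - 1) * Complex.exp (-(r * t))) (Set.Ioi 0) := by
  have hreal : IntegrableOn (fun t : ℝ => t ^ (a.re - 1) * Real.exp (-r.re * t)) (Set.Ioi 0) := by
    simpa using integrableOn_rpow_mul_exp_neg_mul_rpow (p := 1) (s := a.re - 1) (by linarith)
      one_pos hr
  refine hreal.mono' (by fun_prop) ?_
  filter_upwards [ae_restrict_mem measurableSet_Ioi] with t ht
  simp [Complex.norm_cpow_eq_rpow_re_of_pos ht, Complex.norm_exp]

theorem hasDerivAt_integral_cpow_mul_exp_neg_mul_Ioi {a r : ℂ} (ha : 0 < a.re) (hr : 0 < r.re) :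
    HasDerivAt (fun r : ℂ => ∫ t : ℝ in Set.Ioi 0, (t : ℂ) ^ (a - 1) * Complex.exp (-(r * t)))
      (∫ t : ℝ in Set.Ioi 0, (t : ℂ) ^ (a - 1) * (Complex.exp (-(r * t)) * -t)) r := by
  have hnhds : {s : ℂ | r.re / 2 < s.re} ∈ 𝓝 r :=
    (isOpen_lt continuous_const Complex.continuous_re).mem_nhds (half_lt_self hr)
  have hbound : IntegrableOn (fun t : ℝ => t ^ a.re * Real.exp (-(r.re / 2) * t)) (Set.Ioi 0) := by
    simpa using integrableOn_rpow_mul_exp_neg_mul_rpow (p := 1) (s := a.re) (by linarith)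
      one_pos (half_pos hr)
  refine (hasDerivAt_integral_of_dominated_loc_of_deriv_le
    (F := fun (r : ℂ) (t : ℝ) => (t : ℂ) ^ (a - 1) * Complex.exp (-(r * t)))
    (F' := fun (r : ℂ) (t : ℝ) => (t : ℂ) ^ (a - 1) * (Complex.exp (-(r * t)) * -t)) hnhds
    (Eventually.of_forall fun s => by fun_prop)
    (integrableOn_cpow_mul_exp_neg_mul_Ioi ha hr) (by fun_prop) ?_ hbound ?_).2
  · filter_upwards [ae_restrict_mem measurableSet_Ioi] with t (ht : 0 < t) s (hs : _ < _)
    rw [norm_mul, norm_mul, Complex.norm_cpow_eq_rpow_re_of_pos ht, Complex.norm_exp, norm_neg,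
      Complex.norm_of_nonneg ht.le, mul_comm (Real.exp _), ← mul_assoc,
      ← Real.rpow_add_one ht.ne']
    simp only [Complex.sub_re, Complex.one_re, sub_add_cancel, Complex.neg_re,
      Complex.re_mul_ofReal, ← neg_mul]
    gcongr
  · refine Eventually.of_forall fun t s _ => (HasDerivAt.cexp ?_).const_mul _
    simpa using ((hasDerivAt_id s).mul_const (t : ℂ)).fun_neg

theorem integral_cpow_mul_cexp_neg_mul_Ioi {a r : ℂ} (ha : 0 < a.re) (hr : 0 < r.re) :
    ∫ t : ℝ in Set.Ioi 0, (t : ℂ) ^ (a - 1) * Complex.exp (-(r * t)) =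
      Complex.Gamma a * r ^ (-a) := by
  have hopen : IsOpen {r : ℂ | 0 < r.re} := isOpen_lt continuous_const Complex.continuous_re
  have hlhs := DifferentiableOn.analyticOnNhd (fun r (hr : 0 < r.re) =>
    (hasDerivAt_integral_cpow_mul_exp_neg_mul_Ioi ha hr).differentiableAt
      |>.differentiableWithinAt) hopen
  have hrhs : AnalyticOnNhd ℂ (fun r : ℂ => Complex.Gamma a * r ^ (-a)) {r : ℂ | 0 < r.re} :=
    DifferentiableOn.analyticOnNhd (fun r hr =>
      ((differentiableAt_id.cpow_const (Or.inl hr)).const_mul _).differentiableWithinAt) hopen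
  refine hlhs.eqOn_of_preconnected_of_frequently_eq hrhs
    (convex_halfSpace_re_gt 0).isPreconnected (z₀ := 1)
    (show 0 < (1 : ℂ).re from one_pos) ?_ hr
  have hreal : Tendsto ((↑) : ℝ → ℂ) (𝓝[>] 1) (𝓝[≠] 1) := by
    refine tendsto_nhdsWithin_iff.2 ⟨?_, ?_⟩
    · exact (Complex.continuous_ofReal.tendsto' 1 1 (by simp)).mono_left nhdsWithin_le_nhds
    · filter_upwards [self_mem_nhdsWithin] with x (hx : 1 < x)
      simpa using hx.ne'
  refine hreal.frequently (Eventually.frequently ?_)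
  filter_upwards [self_mem_nhdsWithin] with x (hx : 1 < x)
  have hx0 : 0 < x := one_pos.trans hx
  rw [Complex.integral_cpow_mul_exp_neg_mul_Ioi ha hx0, one_div, Complex.inv_cpow,
    Complex.cpow_neg, mul_comm]
  simpa [Complex.arg_ofReal_of_nonneg hx0.le] using Real.pi_pos.ne

theorem ofReal_mul_cpow {t : ℝ} (ht : 0 < t) {c : ℂ} (hc : c ≠ 0) (a : ℂ) :
    ((t : ℂ) * c) ^ a = (t : ℂ) ^ a * c ^ a := by
  have ht' : (t : ℂ) ≠ 0 := Complex.ofReal_ne_zero.2 ht.ne'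
  rw [Complex.cpow_def_of_ne_zero (mul_ne_zero ht' hc), Complex.cpow_def_of_ne_zero ht',
    Complex.cpow_def_of_ne_zero hc, Complex.log_ofReal_mul ht hc, ← Complex.ofReal_log ht.le,
    add_mul, Complex.exp_add]

theorem integral_cexp_neg_mul_rpow_Ioi {α : ℝ} (hα : 0 < α) {r : ℂ} (hr : 0 < r.re) :
    ∫ θ : ℝ in Set.Ioi 0, Complex.exp (-(r * (θ ^ α : ℝ))) =
      Complex.Gamma (1 / α + 1) * r ^ (-(1 / α) : ℂ) := by
  have hα' : (α : ℂ) ≠ 0 := Complex.ofReal_ne_zero.2 hα.ne'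
  have hre : 0 < (1 / α : ℂ).re := by
    rw [← Complex.ofReal_one, ← Complex.ofReal_div, Complex.ofReal_re]
    positivity
  have hsubst := integral_comp_rpow_Ioi_of_pos hα
    (g := fun t : ℝ => (t : ℂ) ^ (1 / α - 1 : ℂ) * Complex.exp (-(r * t)))
  rw [integral_cpow_mul_cexp_neg_mul_Ioi hre hr] at hsubst
  have hpow : ∀ θ : ℝ, 0 < θ →
      (α * θ ^ (α - 1)) • (((θ ^ α : ℝ) : ℂ) ^ (1 / α - 1 : ℂ)) = (α : ℂ) := by
    intro θ hθ
    have hexp : (1 / α - 1 : ℂ) = ((1 / α - 1 : ℝ) : ℂ) := by push_cast; rfl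
    rw [hexp, ← Complex.ofReal_cpow (by positivity), ← Real.rpow_mul hθ.le, Complex.real_smul,
      ← Complex.ofReal_mul, mul_assoc, ← Real.rpow_add hθ]
    field_simp
    simp
  rw [setIntegral_congr_fun measurableSet_Ioi fun θ (hθ : 0 < θ) => by
    rw [← smul_mul_assoc, hpow θ hθ], integral_const_mul] at hsubst
  rw [Complex.Gamma_add_one _ (by simpa using hα'), mul_assoc, ← hsubst]
  field_simp

section ModelIntegral

variable {α : ℝ} {b w c : ℂ}

theorem norm_cpow_mul_cexp_neg_mul_add {t : ℝ} (ht : 0 < t) (x : ℝ) :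
    ‖(t : ℂ) ^ (b - 1) * Complex.exp (-((w + c * (x : ℂ)) * t))‖ =
      t ^ (b.re - 1) * Real.exp (-w.re * t) * Real.exp (-(c.re * t) * x) := by
  rw [norm_mul, Complex.norm_cpow_eq_rpow_re_of_pos ht, Complex.norm_exp, mul_assoc,
    ← Real.exp_add]
  simp only [Complex.neg_re, Complex.re_mul_ofReal, Complex.add_re, Complex.sub_re,
    Complex.one_re]
  ring_nf

theorem integrable_cpow_mul_cexp_neg_mul_add (hα : 0 < α) (hb : 1 / α < b.re) (hw : 0 < w.re)
    (hc : 0 < c.re) :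
    Integrable (fun q : ℝ × ℝ =>
      (q.1 : ℂ) ^ (b - 1) * Complex.exp (-((w + c * (q.2 ^ α : ℝ)) * q.1)))
      ((volume.restrict (Set.Ioi 0)).prod (volume.restrict (Set.Ioi 0))) := by
  have hmeas : Measurable (fun q : ℝ × ℝ =>
      (q.1 : ℂ) ^ (b - 1) * Complex.exp (-((w + c * (q.2 ^ α : ℝ)) * q.1))) := by fun_prop
  refine (integrable_prod_iff hmeas.aestronglyMeasurable).2 ⟨?_, ?_⟩
  · filter_upwards [ae_restrict_mem measurableSet_Ioi] with t (ht : 0 < t)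
    refine Integrable.mono' (g := fun θ => t ^ (b.re - 1) * Real.exp (-w.re * t) *
      Real.exp (-(c.re * t) * θ ^ α)) (Integrable.const_mul ?_ _) (by fun_prop)
      (Eventually.of_forall fun θ => (norm_cpow_mul_cexp_neg_mul_add ht _).le)
    simpa [IntegrableOn] using integrableOn_rpow_mul_exp_neg_mul_rpow (s := 0) (by norm_num) hα
      (mul_pos hc ht)
  · have hreal := (integrableOn_rpow_mul_exp_neg_mul_rpow (p := 1) (s := b.re - 1 - 1 / α)
      (by linarith) one_pos hw).mul_const (c.re ^ (-1 / α) * Real.Gamma (1 / α + 1))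
    refine (integrable_congr ?_).2 hreal
    filter_upwards [ae_restrict_mem measurableSet_Ioi] with t (ht : 0 < t)
    simp only [norm_cpow_mul_cexp_neg_mul_add ht]
    rw [integral_const_mul, integral_exp_neg_mul_rpow hα (mul_pos hc ht),
      Real.mul_rpow hc.le ht.le, Real.rpow_one, sub_eq_add_neg _ (1 / α), Real.rpow_add ht,
      neg_div]
    ring

theorem integral_cpow_mul_cexp_neg_mul_add_Ioi (hα : 0 < α) (hc : 0 < c.re) {t : ℝ} (ht : 0 < t) :
    ∫ θ : ℝ in Set.Ioi 0, (t : ℂ) ^ (b - 1) * Complex.exp (-((w + c * (θ ^ α : ℝ)) * t)) =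
      Complex.Gamma (1 / α + 1) * c ^ (-(1 / α) : ℂ) *
        ((t : ℂ) ^ (b - 1 / α - 1 : ℂ) * Complex.exp (-(w * t))) := by
  have hc0 : c ≠ 0 := fun h => by simp [h] at hc
  have hsplit : ∀ θ : ℝ, Complex.exp (-((w + c * (θ ^ α : ℝ)) * t)) =
      Complex.exp (-(w * t)) * Complex.exp (-(t * c * (θ ^ α : ℝ))) := fun θ => by
    rw [← Complex.exp_add]
    ring_nf
  simp only [hsplit, integral_const_mul]
  rw [integral_cexp_neg_mul_rpow_Ioi hα (by rw [Complex.re_ofReal_mul]; positivity),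
    ofReal_mul_cpow ht hc0, show (b - 1 / α - 1 : ℂ) = b - 1 + -(1 / α) by ring,
    Complex.cpow_add _ _ (Complex.ofReal_ne_zero.2 ht.ne')]
  ring

theorem add_mul_ofReal_re_pos (hw : 0 < w.re) (hc : 0 < c.re) {x : ℝ} (hx : 0 ≤ x) :
    0 < (w + c * (x : ℂ)).re := by
  rw [Complex.add_re, Complex.re_mul_ofReal]
  positivity

theorem integral_add_mul_rpow_cpow_neg (hα : 0 < α) (hb : 1 / α < b.re) (hw : 0 < w.re)
    (hc : 0 < c.re) :
    ∫ θ : ℝ in Set.Ioi 0, (w + c * (θ ^ α : ℝ)) ^ (-b) =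
      Complex.Gamma (1 / α + 1) * Complex.Gamma (b - 1 / α) / Complex.Gamma b *
        c ^ (-(1 / α) : ℂ) * w ^ (-(b - 1 / α)) := by
  have hb0 : 0 < b.re := (by positivity : 0 < 1 / α).trans hb
  have hre : 0 < (b - 1 / α : ℂ).re := by
    rw [← Complex.ofReal_one, ← Complex.ofReal_div, Complex.sub_re, Complex.ofReal_re]
    linarith
  refine mul_left_cancel₀ (Complex.Gamma_ne_zero_of_re_pos hb0) ?_
  calc _ = ∫ θ : ℝ in Set.Ioi 0, ∫ t : ℝ in Set.Ioi 0, (t : ℂ) ^ (b - 1) *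
          Complex.exp (-((w + c * (θ ^ α : ℝ)) * t)) := by
        rw [← integral_const_mul]
        refine setIntegral_congr_fun measurableSet_Ioi fun θ (hθ : 0 < θ) => ?_
        exact (integral_cpow_mul_cexp_neg_mul_Ioi hb0
          (add_mul_ofReal_re_pos hw hc (by positivity))).symm
    _ = ∫ t : ℝ in Set.Ioi 0, ∫ θ : ℝ in Set.Ioi 0, (t : ℂ) ^ (b - 1) *
          Complex.exp (-((w + c * (θ ^ α : ℝ)) * t)) :=
        (integral_integral_swap (integrable_cpow_mul_cexp_neg_mul_add hα hb hw hc)).symm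
    _ = _ := by
        rw [setIntegral_congr_fun measurableSet_Ioi fun t ht =>
            integral_cpow_mul_cexp_neg_mul_add_Ioi hα hc ht, integral_const_mul,
          integral_cpow_mul_cexp_neg_mul_Ioi hre hw]
        field_simp [Complex.Gamma_ne_zero_of_re_pos hb0]

end ModelIntegral

section Convolution

variable {G R : Type*} [AddCommGroup G] [NormedRing R] [CompleteSpace R] {f g : G → R}

theorem hasSum_prod_mul_sub (hf : Summable fun x => ‖f x‖) (hg : Summable fun x => ‖g x‖) :
    HasSum (fun q : G × G => f q.2 * g (q.1 - q.2)) ((∑' x, f x) * ∑' x, g x) := by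
  rw [tsum_mul_tsum_of_summable_norm hf hg]
  exact ((Equiv.prodComm G G).trans (Equiv.prodShear (Equiv.refl G) Equiv.subRight)).hasSum_iff.2
    (summable_mul_of_summable_norm hf hg).hasSum

theorem summable_mul_sub (hf : Summable fun x => ‖f x‖) (hg : Summable fun x => ‖g x‖) (x : G) :
    Summable fun y => f y * g (x - y) :=
  (hasSum_prod_mul_sub hf hg).summable.prod_factor x

theorem hasSum_tsum_mul_sub (hf : Summable fun x => ‖f x‖) (hg : Summable fun x => ‖g x‖) :
    HasSum (fun x => ∑' y, f y * g (x - y)) ((∑' x, f x) * ∑' x, g x) :=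
  (hasSum_prod_mul_sub hf hg).prod_fiberwise fun x => (summable_mul_sub hf hg x).hasSum

end Convolution

section FourierSeries

variable {q r : ℤ → ℝ}

theorem norm_exp_I_mul_mul_intCast (θ : ℝ) (x : ℤ) : ‖Complex.exp (Complex.I * θ * x)‖ = 1 := by
  rw [show Complex.I * θ * x = ((θ * x : ℝ) : ℂ) * Complex.I by push_cast; ring]
  exact Complex.norm_exp_ofReal_mul_I _

theorem norm_ofReal_mul_exp_I_mul_mul_intCast (a θ : ℝ) (x : ℤ) :
    ‖(a : ℂ) * Complex.exp (Complex.I * θ * x)‖ = ‖a‖ := by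
  rw [norm_mul, norm_exp_I_mul_mul_intCast, mul_one, Complex.norm_real]

theorem summable_norm_rwChar_term (hq : Summable q) (θ : ℝ) :
    Summable fun x : ℤ => ‖(q x : ℂ) * Complex.exp (Complex.I * θ * x)‖ := by
  simpa only [norm_ofReal_mul_exp_I_mul_mul_intCast] using hq.norm

theorem hasSum_rwChar (hq : Summable q) (θ : ℝ) :
    HasSum (fun x : ℤ => (q x : ℂ) * Complex.exp (Complex.I * θ * x)) (rwChar q θ) :=
  (summable_norm_rwChar_term hq θ).of_norm.hasSum

theorem continuous_rwChar (hq : Summable q) : Continuous (rwChar q) :=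
  continuous_tsum (fun x => by fun_prop) hq.norm fun x θ =>
    (norm_ofReal_mul_exp_I_mul_mul_intCast (q x) θ x).le

theorem rwChar_zero {a : ℝ} (hq : HasSum q a) : rwChar q 0 = a := by
  simp [rwChar, ← Complex.ofReal_tsum, hq.tsum_eq]

theorem norm_rwChar_le {a : ℝ} (hq₀ : ∀ x, 0 ≤ q x) (hq : HasSum q a) (θ : ℝ) :
    ‖rwChar q θ‖ ≤ a :=
  tsum_of_norm_bounded hq fun x => by
    rw [norm_ofReal_mul_exp_I_mul_mul_intCast, Real.norm_of_nonneg (hq₀ x)]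

theorem eq_zero_of_exp_I_mul_eq_one {θ : ℝ} (hθ : |θ| ≤ π) (h : Complex.exp (Complex.I * θ) = 1) :
    θ = 0 := by
  rw [mul_comm] at h
  have hcos : Real.cos θ = 1 := by rw [← Complex.exp_ofReal_mul_I_re, h, Complex.one_re]
  have := abs_le.1 hθ
  have := Real.pi_pos
  exact (Real.cos_eq_one_iff_of_lt_of_lt (by linarith) (by linarith)).1 hcos

theorem eq_one_of_norm_eq_one_of_one_le_re {w : ℂ} (hw : ‖w‖ = 1) (hre : 1 ≤ w.re) : w = 1 := by
  have hnorm : w.re = ‖w‖ := (Complex.re_le_norm w).antisymm (hw ▸ hre)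
  rw [Complex.eq_coe_norm_of_nonneg (Complex.re_eq_norm.1 hnorm), hw, Complex.ofReal_one]

-- Equality in the triangle inequality forces `u e^{iθy} = 1` at both `y = x` and `y = x + 1`.
theorem norm_rwChar_lt {a : ℝ} (hq₀ : ∀ x, 0 ≤ q x) (hq : HasSum q a) {x : ℤ} (hx : 0 < q x)
    (hx' : 0 < q (x + 1)) {θ : ℝ} (hθ : |θ| ≤ π) (hθ₀ : θ ≠ 0) : ‖rwChar q θ‖ < a := by
  obtain ⟨u, hu, hS⟩ := RCLike.exists_norm_eq_mul_self (rwChar q θ)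
  have hnorm : ∀ y : ℤ, ‖u * Complex.exp (Complex.I * θ * y)‖ = 1 := fun y => by
    rw [norm_mul, hu, norm_exp_I_mul_mul_intCast, one_mul]
  have hsum : HasSum (fun y : ℤ => q y * (u * Complex.exp (Complex.I * θ * y)).re)
      ‖rwChar q θ‖ := by
    have := Complex.hasSum_re ((hasSum_rwChar hq.summable θ).mul_left u)
    rw [← hS] at this
    refine this.congr_fun fun y => ?_
    rw [mul_left_comm, Complex.re_ofReal_mul]
  have hle : ∀ y, q y * (u * Complex.exp (Complex.I * θ * y)).re ≤ q y := fun y =>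
    mul_le_of_le_one_right (hq₀ y) ((Complex.re_le_norm _).trans (hnorm y).le)
  by_contra hge
  have hone : ∀ y, 0 < q y → u * Complex.exp (Complex.I * θ * y) = 1 := fun y hy =>
    eq_one_of_norm_eq_one_of_one_le_re (hnorm y) <| by
      by_contra! hlt
      exact hge (hasSum_lt (i := y) hle (mul_lt_of_lt_one_right hy hlt) hsum hq)
  have hstep : Complex.exp (Complex.I * θ) = 1 := by
    have h₁ := hone _ hx'
    rw [Int.cast_add, Int.cast_one, mul_add, mul_one, Complex.exp_add, ← mul_assoc,
      hone x hx, one_mul] at h₁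
    exact h₁
  exact hθ₀ (eq_zero_of_exp_I_mul_eq_one hθ hstep)

theorem rwChar_tsum_mul_sub (hq : Summable q) (hr : Summable r) (θ : ℝ) :
    rwChar (fun x => ∑' y, q y * r (x - y)) θ = rwChar q θ * rwChar r θ := by
  refine Eq.trans (tsum_congr fun x => ?_) (hasSum_tsum_mul_sub
    (summable_norm_rwChar_term hq θ) (summable_norm_rwChar_term hr θ)).tsum_eq
  rw [Complex.ofReal_tsum, ← tsum_mul_right]
  refine tsum_congr fun y => ?_
  rw [show Complex.I * θ * x = Complex.I * θ * y + Complex.I * θ * (x - y : ℤ) by push_cast; ring,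
    Complex.exp_add]
  push_cast
  ring

theorem integral_exp_I_mul_mul_intCast (x : ℤ) :
    ∫ θ in (-π)..π, Complex.exp (Complex.I * θ * x) = if x = 0 then 2 * (π : ℂ) else 0 := by
  split_ifs with hx
  · simp [hx, two_mul]
  · have hIx : Complex.I * x ≠ 0 := by simp [hx]
    simp_rw [mul_right_comm Complex.I _ (x : ℂ)]
    rw [integral_exp_mul_complex hIx, div_eq_zero_iff, sub_eq_zero]
    exact Or.inl (Complex.exp_eq_exp_iff_exists_int.2 ⟨x, by push_cast; ring⟩)

theorem integral_rwChar (hq : Summable q) :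
    ∫ θ in (-π)..π, rwChar q θ = 2 * π * (q 0 : ℂ) := by
  have hsum := intervalIntegral.hasSum_integral_of_dominated_convergence (μ := volume)
    (a := -π) (b := π) (F := fun (x : ℤ) (θ : ℝ) => (q x : ℂ) * Complex.exp (Complex.I * θ * x))
    (fun x _ => ‖q x‖) (fun x => by fun_prop)
    (fun x => ae_of_all _ fun θ _ => (norm_ofReal_mul_exp_I_mul_mul_intCast (q x) θ x).le)
    (ae_of_all _ fun _ _ => hq.norm) (by simp) (ae_of_all _ fun θ _ => hasSum_rwChar hq θ)
  simp only [intervalIntegral.integral_const_mul, integral_exp_I_mul_mul_intCast, mul_ite,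
    mul_zero] at hsum
  rw [← hsum.tsum_eq, tsum_eq_single 0 fun x hx => if_neg hx, if_pos rfl, mul_comm]

end FourierSeries

/-- The integrand `φ^k / (1 - z φ)^(k+1)`, which is `1/k!` times the `k`-th derivative in `z` of
`1 / (1 - z φ)`. -/
noncomputable def resolventPow (φ : ℝ → ℂ) (k : ℕ) (z : ℂ) (θ : ℝ) : ℂ :=
  φ θ ^ k * (1 - z * φ θ)⁻¹ ^ (k + 1)

/-- The integral of `φ^k / (1 - z φ)^(k+1)` over a period; for `k = 0` and `φ` the characteristic
function of a random walk it is `2π` times the generating function of the return probabilities. -/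
noncomputable def resolventIntegral (φ : ℝ → ℂ) (k : ℕ) (z : ℂ) : ℂ :=
  ∫ θ in (-π)..π, resolventPow φ k z θ

section Resolvent

variable {φ : ℝ → ℂ} {z : ℂ}

theorem norm_mul_lt_one_of_norm_le_one (hz : ‖z‖ < 1) {u : ℂ} (hu : ‖u‖ ≤ 1) : ‖z * u‖ < 1 := by
  rw [norm_mul]
  exact (mul_le_of_le_one_right (norm_nonneg z) hu).trans_lt hz

theorem one_sub_mul_ne_zero_of_norm_le_one (hz : ‖z‖ < 1) {u : ℂ} (hu : ‖u‖ ≤ 1) :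
    1 - z * u ≠ 0 := fun h => by
  have := norm_mul_lt_one_of_norm_le_one hz hu
  rw [← sub_eq_zero.1 h, norm_one] at this
  exact lt_irrefl _ this

theorem continuousOn_resolventPow (hφ : Continuous φ) (hle : ∀ θ, |θ| ≤ π → ‖φ θ‖ ≤ 1)
    (hz : ‖z‖ < 1) (k : ℕ) : ContinuousOn (resolventPow φ k z) (Set.Icc (-π) π) :=
  (hφ.pow k).continuousOn.mul
    (((continuous_const.sub (continuous_const.mul hφ)).continuousOn.inv₀ fun θ hθ =>
      one_sub_mul_ne_zero_of_norm_le_one hz (hle θ (abs_le.2 hθ))).pow (k + 1))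

theorem norm_one_sub_pos (hz : ‖z‖ < 1) : 0 < ‖1 - z‖ :=
  norm_pos_iff.2 (sub_ne_zero.2 fun h => by simp [← h] at hz)

theorem half_lt_inv_one_sub_re {w : ℂ} (hw : ‖w‖ < 1) : 1 / 2 < ((1 - w)⁻¹).re := by
  have hw₁ : Complex.normSq w < 1 := by
    rw [Complex.normSq_eq_norm_sq]
    exact pow_lt_one₀ (norm_nonneg w) hw two_ne_zero
  have hpos : 0 < Complex.normSq (1 - w) := by
    rw [Complex.normSq_eq_norm_sq]
    exact pow_pos (norm_one_sub_pos hw) 2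
  rw [Complex.inv_re, div_lt_div_iff₀ two_pos hpos]
  rw [Complex.normSq_apply] at hw₁
  rw [Complex.normSq_apply, Complex.sub_re, Complex.sub_im, Complex.one_re, Complex.one_im]
  nlinarith

theorem intervalIntegrable_resolventPow (hφ : Continuous φ) (hle : ∀ θ, |θ| ≤ π → ‖φ θ‖ ≤ 1)
    (hz : ‖z‖ < 1) (k : ℕ) : IntervalIntegrable (resolventPow φ k z) volume (-π) π :=
  (continuousOn_resolventPow hφ hle hz k).intervalIntegrable_of_Icc (by linarith [Real.pi_pos])

theorem pi_le_resolventIntegral_zero_re (hφ : Continuous φ) (hle : ∀ θ, |θ| ≤ π → ‖φ θ‖ ≤ 1)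
    (hz : ‖z‖ < 1) : π ≤ (resolventIntegral φ 0 z).re := by
  have hint := intervalIntegrable_resolventPow hφ hle hz 0
  have hmono : ∫ _ in (-π)..π, (1 / 2 : ℝ) ≤ ∫ θ in (-π)..π, (resolventPow φ 0 z θ).re :=
    intervalIntegral.integral_mono_on (by linarith [Real.pi_pos]) intervalIntegrable_const
      ⟨hint.1.re, hint.2.re⟩ fun θ hθ => by
        simpa [resolventPow] using (half_lt_inv_one_sub_re
          (norm_mul_lt_one_of_norm_le_one hz (hle θ (abs_le.2 hθ)))).le
  calc π = ∫ _ in (-π)..π, (1 / 2 : ℝ) := by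
        rw [intervalIntegral.integral_const, smul_eq_mul]
        ring
    _ ≤ ∫ θ in (-π)..π, (resolventPow φ 0 z θ).re := hmono
    _ = (resolventIntegral φ 0 z).re := intervalIntegral.intervalIntegral_re hint

theorem resolventIntegral_zero_ne_zero (hφ : Continuous φ) (hle : ∀ θ, |θ| ≤ π → ‖φ θ‖ ≤ 1)
    (hz : ‖z‖ < 1) : resolventIntegral φ 0 z ≠ 0 := fun h => by
  have := pi_le_resolventIntegral_zero_re hφ hle hz
  rw [h, Complex.zero_re] at this
  linarith [Real.pi_pos]

theorem hasDerivAt_resolventPow {θ : ℝ} (hz : 1 - z * φ θ ≠ 0) (k : ℕ) :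
    HasDerivAt (fun z => resolventPow φ k z θ) ((k + 1) * resolventPow φ (k + 1) z θ) z := by
  have hlin : HasDerivAt (fun z : ℂ => 1 - z * φ θ) (-φ θ) z := by
    simpa using ((hasDerivAt_id z).mul_const (φ θ)).const_sub 1
  refine (((hlin.fun_inv hz).fun_pow (k + 1)).const_mul (φ θ ^ k)).congr_deriv ?_
  rw [resolventPow, Nat.add_sub_cancel, neg_neg, div_eq_mul_inv, ← inv_pow]
  push_cast
  ring

theorem norm_resolventPow_le {θ r : ℝ} (hr : 0 < r) (hφ : ‖φ θ‖ ≤ 1) (hz : r ≤ ‖1 - z * φ θ‖)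
    (k : ℕ) : ‖resolventPow φ k z θ‖ ≤ r⁻¹ ^ (k + 1) := by
  rw [resolventPow, norm_mul, norm_pow, norm_pow, norm_inv]
  calc ‖φ θ‖ ^ k * ‖1 - z * φ θ‖⁻¹ ^ (k + 1) ≤ 1 * r⁻¹ ^ (k + 1) := by
        gcongr
        exact pow_le_one₀ (norm_nonneg _) hφ
    _ = r⁻¹ ^ (k + 1) := one_mul _

theorem hasDerivAt_resolventIntegral (hφ : Continuous φ) (hle : ∀ θ, |θ| ≤ π → ‖φ θ‖ ≤ 1)
    (hz : ‖z‖ < 1) (k : ℕ) :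
    HasDerivAt (resolventIntegral φ k) ((k + 1) * resolventIntegral φ (k + 1) z) z := by
  set r := (1 - ‖z‖) / 2 with hr
  have hr₀ : 0 < r := by linarith
  have hball : ∀ x ∈ Metric.ball z r, ‖x‖ < 1 - r := fun x hx => by
    rw [mem_ball_iff_norm] at hx
    linarith [norm_sub_norm_le x z]
  have hlt : ∀ x ∈ Metric.ball z r, ‖x‖ < 1 := fun x hx => (hball x hx).trans (by linarith)
  have habs : ∀ θ ∈ Set.uIoc (-π) π, |θ| ≤ π := fun θ hθ => by
    rw [Set.uIoc_of_le (by linarith [Real.pi_pos])] at hθ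
    exact abs_le.2 ⟨hθ.1.le, hθ.2⟩
  have hlower : ∀ x ∈ Metric.ball z r, ∀ θ, |θ| ≤ π → r ≤ ‖1 - x * φ θ‖ := fun x hx θ hθ => by
    have hsub := norm_sub_norm_le (1 : ℂ) (x * φ θ)
    rw [norm_one, norm_mul] at hsub
    linarith [mul_le_of_le_one_right (norm_nonneg x) (hle θ hθ), hball x hx]
  have hderiv := (intervalIntegral.hasDerivAt_integral_of_dominated_loc_of_deriv_le (μ := volume)
    (a := -π) (b := π) (F := resolventPow φ k)
    (F' := fun z θ => (k + 1) * resolventPow φ (k + 1) z θ)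
    (bound := fun _ => (k + 1) * r⁻¹ ^ (k + 1 + 1)) (Metric.ball_mem_nhds z hr₀)
    (eventually_of_mem (Metric.ball_mem_nhds z hr₀) fun x hx =>
      (intervalIntegrable_resolventPow hφ hle (hlt x hx) k).aestronglyMeasurable_restrict_uIoc)
    (intervalIntegrable_resolventPow hφ hle hz k)
    ((intervalIntegrable_resolventPow hφ hle hz (k + 1)).const_mul
      _).aestronglyMeasurable_restrict_uIoc
    (ae_of_all _ fun θ hθ x hx => by
      rw [norm_mul, ← Nat.cast_succ, Complex.norm_natCast, Nat.cast_succ]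
      gcongr
      exact norm_resolventPow_le hr₀ (hle θ (habs θ hθ)) (hlower x hx θ (habs θ hθ)) (k + 1))
    intervalIntegrable_const
    (ae_of_all _ fun θ hθ x hx => hasDerivAt_resolventPow
      (one_sub_mul_ne_zero_of_norm_le_one (hlt x hx) (hle θ (habs θ hθ))) k)).2
  rwa [intervalIntegral.integral_const_mul] at hderiv

end Resolvent

section RandomWalk

open Finset.HasAntidiagonal (antidiagonal)

variable {p : ℤ → ℝ}

theorem pn_nonneg (hp₀ : ∀ x, 0 ≤ p x) (n : ℕ) (x : ℤ) : 0 ≤ pn p n x := by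
  induction n generalizing x with
  | zero => rw [pn]; positivity
  | succ n ih => exact tsum_nonneg fun y => mul_nonneg (ih y) (hp₀ _)

theorem hasSum_pn {a : ℝ} (hp : HasSum p a) (n : ℕ) : HasSum (pn p n) (a ^ n) := by
  induction n with
  | zero => simpa only [pn, pow_zero] using hasSum_ite_eq (0 : ℤ) (1 : ℝ)
  | succ n ih =>
    have hconv := hasSum_tsum_mul_sub ih.summable.norm hp.summable.norm
    rwa [ih.tsum_eq, hp.tsum_eq, ← pow_succ] at hconv

theorem summable_pn (hp : Summable p) (n : ℕ) : Summable (pn p n) :=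
  (hasSum_pn hp.hasSum n).summable

theorem pn_le_one (hp₀ : ∀ x, 0 ≤ p x) (hp₁ : HasSum p 1) (n : ℕ) (x : ℤ) : pn p n x ≤ 1 := by
  simpa only [one_pow] using le_hasSum (hasSum_pn hp₁ n) x fun y _ => pn_nonneg hp₀ n y

theorem rwChar_pn (hp : Summable p) (n : ℕ) (θ : ℝ) : rwChar (pn p n) θ = rwChar p θ ^ n := by
  induction n with
  | zero =>
    rw [rwChar, pow_zero, tsum_eq_single 0 fun x hx => by simp [pn, hx]]
    simp [pn]
  | succ n ih =>
    rw [pow_succ, ← ih]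
    exact rwChar_tsum_mul_sub (summable_pn hp n) hp θ

theorem norm_rwChar_lt_one (hp₀ : ∀ x, 0 ≤ p x) (hp₁ : HasSum p 1)
    (hap : ∃ n x, 0 < pn p n x ∧ 0 < pn p n (x + 1)) {θ : ℝ} (hθ : |θ| ≤ π) (hθ₀ : θ ≠ 0) :
    ‖rwChar p θ‖ < 1 := by
  obtain ⟨n, x, hx, hx'⟩ := hap
  have hlt := norm_rwChar_lt (pn_nonneg hp₀ n) (hasSum_pn hp₁ n) hx hx' hθ hθ₀
  rw [rwChar_pn hp₁.summable, norm_pow, one_pow] at hlt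
  exact lt_of_not_ge fun hge => hlt.not_ge (one_le_pow₀ hge)

theorem pk_nonneg (hp₀ : ∀ x, 0 ≤ p x) (B : Set ℤ) (n : ℕ) (x y : ℤ) : 0 ≤ pk p B n x y := by
  induction n generalizing y with
  | zero => rw [pk]; positivity
  | succ n ih =>
    exact Set.indicator_nonneg (fun w _ => tsum_nonneg fun z => mul_nonneg (ih z) (hp₀ _)) y

theorem summable_pk (hp : Summable p) (B : Set ℤ) (n : ℕ) (x : ℤ) : Summable (pk p B n x) := by
  induction n with
  | zero => simpa only [pk, eq_comm] using (hasSum_ite_eq x (1 : ℝ)).summable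
  | succ n ih => exact (hasSum_tsum_mul_sub ih.norm hp.norm).summable.indicator Bᶜ

theorem firstReturn_nonneg (hp₀ : ∀ x, 0 ≤ p x) (n : ℕ) : 0 ≤ firstReturn p n := by
  cases n with
  | zero => rw [firstReturn]
  | succ n => exact tsum_nonneg fun z => mul_nonneg (pk_nonneg hp₀ _ n 0 z) (hp₀ _)

theorem tsum_pk_singleton_mul_sub (n : ℕ) (x : ℤ) :
    ∑' y, pk p {0} n 0 y * p (x - y) = pk p {0} (n + 1) 0 x + firstReturn p (n + 1) * pn p 0 x := by
  rcases eq_or_ne x 0 with rfl | hx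
  · simp [pk, pn, firstReturn]
  · simp [pk, pn, hx]

theorem pn_eq_pk_add_sum_antidiagonal (hp : Summable p) (n : ℕ) (x : ℤ) :
    pn p n x = pk p {0} n 0 x +
      ∑ ij ∈ antidiagonal n, firstReturn p ij.1 * pn p ij.2 x := by
  induction n generalizing x with
  | zero => simp [pn, pk, firstReturn, eq_comm]
  | succ n ih =>
    have hpn : ∀ ij ∈ antidiagonal n,
        Summable fun y => firstReturn p ij.1 * (pn p ij.2 y * p (x - y)) := fun ij _ =>
      (summable_mul_sub (summable_pn hp ij.2).norm hp.norm x).mul_left (firstReturn p ij.1)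
    have hpk : Summable fun y => pk p {0} n 0 y * p (x - y) :=
      summable_mul_sub (summable_pk hp _ n 0).norm hp.norm x
    calc pn p (n + 1) x = ∑' y, pn p n y * p (x - y) := rfl
      _ = ∑' y, (pk p {0} n 0 y * p (x - y) +
            ∑ ij ∈ antidiagonal n, firstReturn p ij.1 * (pn p ij.2 y * p (x - y))) := by
        simp_rw [ih, add_mul, Finset.sum_mul, mul_assoc]
      _ = ∑' y, pk p {0} n 0 y * p (x - y) +
            ∑ ij ∈ antidiagonal n, firstReturn p ij.1 * pn p (ij.2 + 1) x := by
        rw [hpk.tsum_add (summable_sum hpn), Summable.tsum_finsetSum hpn]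
        simp only [tsum_mul_left, pn]
      _ = _ := by
        rw [tsum_pk_singleton_mul_sub, Finset.Nat.sum_antidiagonal_succ', add_assoc]

theorem renewal_equation (hp : Summable p) (n : ℕ) :
    pn p n 0 = (if n = 0 then 1 else 0) +
      ∑ ij ∈ antidiagonal n, firstReturn p ij.1 * pn p ij.2 0 := by
  rw [pn_eq_pk_add_sum_antidiagonal hp n 0]
  cases n <;> simp [pk]

theorem firstReturn_le_one (hp₀ : ∀ x, 0 ≤ p x) (hp₁ : HasSum p 1) (n : ℕ) :
    firstReturn p n ≤ 1 := by
  have hterm : firstReturn p n * pn p 0 0 ≤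
      ∑ ij ∈ antidiagonal n, firstReturn p ij.1 * pn p ij.2 0 :=
    Finset.single_le_sum (f := fun ij : ℕ × ℕ => firstReturn p ij.1 * pn p ij.2 0) (a := (n, 0))
      (fun ij _ => mul_nonneg (firstReturn_nonneg hp₀ ij.1) (pn_nonneg hp₀ ij.2 0)) (by simp)
  have hindicator : (0 : ℝ) ≤ if n = 0 then 1 else 0 := by positivity
  rw [pn, if_pos rfl, mul_one] at hterm
  linarith [renewal_equation hp₁.summable n, pn_le_one hp₀ hp₁ n 0]

theorem summable_norm_ofReal_mul_pow {a : ℕ → ℝ} (ha₀ : ∀ n, 0 ≤ a n) (ha₁ : ∀ n, a n ≤ 1)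
    {z : ℂ} (hz : ‖z‖ < 1) : Summable fun n => ‖(a n : ℂ) * z ^ n‖ := by
  refine .of_nonneg_of_le (fun _ => norm_nonneg _) (fun n => ?_)
    (summable_geometric_of_lt_one (norm_nonneg z) hz)
  rw [norm_mul, norm_pow, Complex.norm_of_nonneg (ha₀ n)]
  exact mul_le_of_le_one_left (by positivity) (ha₁ n)

theorem hasSum_of_renewal {𝕜 : Type*} [NormedField 𝕜] [CompleteSpace 𝕜] {f u : ℕ → 𝕜} {U : 𝕜}
    (hf : Summable fun n => ‖f n‖) (hu : Summable fun n => ‖u n‖) (hU : HasSum u U) (hU₀ : U ≠ 0)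
    (hren : ∀ n, u n = (if n = 0 then 1 else 0) + ∑ ij ∈ antidiagonal n, f ij.1 * u ij.2) :
    HasSum f (1 - U⁻¹) := by
  have hsum : HasSum (fun n => (if n = 0 then (1 : 𝕜) else 0) +
      ∑ ij ∈ antidiagonal n, f ij.1 * u ij.2) (1 + (∑' n, f n) * U) := by
    rw [← hU.tsum_eq, tsum_mul_tsum_eq_tsum_sum_antidiagonal_of_summable_norm hf hu]
    exact (hasSum_ite_eq 0 1).add
      (summable_norm_sum_mul_antidiagonal_of_summable_norm hf hu).of_norm.hasSum
  have hFU : U = 1 + (∑' n, f n) * U := hU.unique (by simpa only [← hren] using hsum)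
  have hF : ∑' n, f n = 1 - U⁻¹ := by
    field_simp
    linear_combination -hFU
  exact hF ▸ hf.of_norm.hasSum

theorem hasSum_pn_zero_mul_pow (hp₀ : ∀ x, 0 ≤ p x) (hp₁ : HasSum p 1) {z : ℂ} (hz : ‖z‖ < 1) :
    HasSum (fun n => (pn p n 0 : ℂ) * z ^ n) (resolventIntegral (rwChar p) 0 z / (2 * π)) := by
  have hφ := continuous_rwChar hp₁.summable
  have hle := norm_rwChar_le hp₀ hp₁
  have hsum := intervalIntegral.hasSum_integral_of_dominated_convergence (μ := volume)
    (a := -π) (b := π) (F := fun n θ => (z * rwChar p θ) ^ n) (f := resolventPow (rwChar p) 0 z)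
    (fun n _ => ‖z‖ ^ n)
    (fun n => (by fun_prop : Continuous fun θ => (z * rwChar p θ) ^ n).aestronglyMeasurable)
    (fun n => ae_of_all _ fun θ _ => by
      rw [norm_pow, norm_mul]
      gcongr
      exact mul_le_of_le_one_right (norm_nonneg z) (hle θ))
    (ae_of_all _ fun θ _ => summable_geometric_of_lt_one (norm_nonneg z) hz)
    intervalIntegrable_const
    (ae_of_all _ fun θ _ => by
      simpa [resolventPow] using
        hasSum_geometric_of_norm_lt_one (norm_mul_lt_one_of_norm_le_one hz (hle θ)))
  refine (hsum.div_const (2 * π : ℂ)).congr_fun fun n => ?_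
  simp_rw [mul_pow, ← rwChar_pn hp₁.summable]
  rw [intervalIntegral.integral_const_mul, integral_rwChar (summable_pn hp₁.summable n)]
  field_simp

theorem hasSum_firstReturn_mul_pow (hp₀ : ∀ x, 0 ≤ p x) (hp₁ : HasSum p 1) {z : ℂ} (hz : ‖z‖ < 1) :
    HasSum (fun n => (firstReturn p n : ℂ) * z ^ n)
      (1 - 2 * π / resolventIntegral (rwChar p) 0 z) := by
  have hU := resolventIntegral_zero_ne_zero (continuous_rwChar hp₁.summable)
    (fun θ _ => norm_rwChar_le hp₀ hp₁ θ) hz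
  rw [← inv_div]
  refine hasSum_of_renewal
    (summable_norm_ofReal_mul_pow (firstReturn_nonneg hp₀) (firstReturn_le_one hp₀ hp₁) hz)
    (summable_norm_ofReal_mul_pow (fun n => pn_nonneg hp₀ n 0) (fun n => pn_le_one hp₀ hp₁ n 0) hz)
    (hasSum_pn_zero_mul_pow hp₀ hp₁ hz)
    (div_ne_zero hU (by simp [Real.pi_ne_zero])) fun n => ?_
  have hn := congrArg (fun x : ℝ => (x : ℂ) * z ^ n) (renewal_equation hp₁.summable n)
  push_cast at hn
  rw [hn, add_mul, Finset.sum_mul]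
  congr 1
  · split_ifs with h <;> simp [h]
  · refine Finset.sum_congr rfl fun ij hij => ?_
    rw [← Finset.HasAntidiagonal.mem_antidiagonal.1 hij, pow_add]
    ring

end RandomWalk

theorem integrable_inv_one_add_abs_rpow {α : ℝ} (hα : 1 < α) :
    Integrable fun t : ℝ => (1 + |t| ^ α)⁻¹ := by
  have hα0 : 0 < α := one_pos.trans hα
  have hnorm : Integrable fun t : ℝ => (1 + ‖t‖) ^ (-α) := integrable_one_add_norm (by simpa)
  have hcont : Continuous fun t : ℝ => |t| ^ α :=
    continuous_abs.rpow_const fun _ => Or.inr hα0.le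
  refine (hnorm.const_mul (2 ^ (α - 1))).mono'
    ((continuous_const.add hcont).inv₀ fun t =>
      (by positivity : 1 + |t| ^ α ≠ 0)).aestronglyMeasurable
    (Eventually.of_forall fun t => ?_)
  have hconvex : (1 + |t|) ^ α ≤ 2 ^ (α - 1) * (1 ^ α + |t| ^ α) := mod_cast
    NNReal.rpow_add_le_mul_rpow_add_rpow 1 (Real.nnabs t) hα.le
  rw [Real.one_rpow] at hconvex
  rw [Real.norm_of_nonneg (by positivity), Real.norm_eq_abs, Real.rpow_neg (by positivity),
    ← div_eq_mul_inv, inv_eq_one_div, div_le_div_iff₀ (by positivity) (by positivity), one_mul]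
  exact hconvex

theorem norm_add_le_mul_norm_add_of_re {a b x : ℝ} {w ζ : ℂ} (ha : 0 < a) (hb : 0 ≤ b)
    (hre : a * x ≤ ζ.re) (hnorm : ‖ζ‖ ≤ b * x) (hw : 0 ≤ w.re) :
    ‖w‖ + x ≤ (1 + (1 + b) / a) * ‖w + ζ‖ := by
  have hx : x ≤ ‖w + ζ‖ / a := by
    rw [le_div_iff₀' ha]
    calc a * x ≤ (w + ζ).re := by rw [Complex.add_re]; linarith
      _ ≤ ‖w + ζ‖ := Complex.re_le_norm _
  have hw' : ‖w‖ ≤ ‖w + ζ‖ + ‖ζ‖ := by simpa using norm_sub_le (w + ζ) ζ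
  calc ‖w‖ + x ≤ ‖w + ζ‖ + (1 + b) * x := by linarith
    _ ≤ ‖w + ζ‖ + (1 + b) * (‖w + ζ‖ / a) := by gcongr
    _ = (1 + (1 + b) / a) * ‖w + ζ‖ := by ring

theorem tendsto_pow_sub_pow_zero_of_bounded {ι : Type*} {l : Filter ι} {x y : ι → ℂ} {M : ℝ}
    (hx : ∀ᶠ i in l, ‖x i‖ ≤ M) (hy : ∀ᶠ i in l, ‖y i‖ ≤ M)
    (hxy : Tendsto (fun i => x i - y i) l (𝓝 0)) (n : ℕ) :
    Tendsto (fun i => x i ^ n - y i ^ n) l (𝓝 0) := by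
  simp_rw [← geom_sum₂_mul]
  refine isBoundedUnder_le_mul_tendsto_zero
    ⟨∑ j ∈ Finset.range n, M ^ j * M ^ (n - 1 - j), eventually_map.2 ?_⟩ hxy
  filter_upwards [hx, hy] with i hxi hyi
  have hM : 0 ≤ M := (norm_nonneg _).trans hxi
  refine (norm_sum_le _ _).trans (Finset.sum_le_sum fun j _ => ?_)
  rw [norm_mul, norm_pow, norm_pow]
  gcongr

theorem norm_smul_inv_le {ρ κ : ℝ} {v : ℂ} (hρ : 0 < ρ) (hκ : 0 < κ) (hv : κ * ρ ≤ ‖v‖) :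
    ‖ρ • v⁻¹‖ ≤ κ⁻¹ := by
  have : 0 < κ * ρ := mul_pos hκ hρ
  rw [norm_smul, norm_inv, Real.norm_of_nonneg hρ.le, ← div_eq_mul_inv, inv_eq_one_div,
    div_le_div_iff₀ (by linarith) hκ]
  linarith

theorem tendsto_smul_inv_pow_sub_zero {ι : Type*} {l : Filter ι} {ρ : ι → ℝ} {u v : ι → ℂ}
    {κ : ℝ} (hκ : 0 < κ) (hρ : ∀ᶠ i in l, 0 < ρ i) (hu : ∀ᶠ i in l, κ * ρ i ≤ ‖u i‖)
    (hv : ∀ᶠ i in l, κ * ρ i ≤ ‖v i‖) (huv : (fun i => v i - u i) =o[l] ρ) (n : ℕ) :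
    Tendsto (fun i => ρ i ^ n • (u i)⁻¹ ^ n - ρ i ^ n • (v i)⁻¹ ^ n) l (𝓝 0) := by
  have hbound : ∀ {y : ι → ℂ}, (∀ᶠ i in l, κ * ρ i ≤ ‖y i‖) →
      ∀ᶠ i in l, ‖ρ i • (y i)⁻¹‖ ≤ κ⁻¹ := fun hy =>
    (hρ.and hy).mono fun i hi => norm_smul_inv_le hi.1 hκ hi.2
  have hratio : Tendsto (fun i => (v i - u i) / ρ i) l (𝓝 0) :=
    (Complex.isLittleO_ofReal_right.2 huv).tendsto_div_nhds_zero
  have hxy : Tendsto (fun i => ρ i • (u i)⁻¹ - ρ i • (v i)⁻¹) l (𝓝 0) := by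
    have hprod : ∀ᶠ i in l, ‖ρ i • (u i)⁻¹ * ρ i • (v i)⁻¹‖ ≤ κ⁻¹ * κ⁻¹ := by
      filter_upwards [hbound hu, hbound hv] with i hui hvi
      rw [norm_mul]
      gcongr
    refine (isBoundedUnder_le_mul_tendsto_zero ⟨_, eventually_map.2 hprod⟩ hratio).congr' ?_
    filter_upwards [hρ, hu, hv] with i hρi hui hvi
    have hu0 : u i ≠ 0 := norm_pos_iff.1 ((mul_pos hκ hρi).trans_le hui)
    have hv0 : v i ≠ 0 := norm_pos_iff.1 ((mul_pos hκ hρi).trans_le hvi)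
    have hρ0 : (ρ i : ℂ) ≠ 0 := Complex.ofReal_ne_zero.2 hρi.ne'
    simp only [Complex.real_smul]
    field_simp
  simp_rw [← smul_pow]
  exact tendsto_pow_sub_pow_zero_of_bounded (hbound hu) (hbound hv) hxy n

/-- The homogeneous symbol `c₊ |θ|^α` for `0 < θ`, `c₋ |θ|^α` for `θ ≤ 0`, i.e. the characteristic
exponent of an `α`-stable law. -/
noncomputable def stableExponent (α : ℝ) (cp cm : ℂ) (θ : ℝ) : ℂ :=
  (if 0 < θ then cp else cm) * (|θ| ^ α : ℝ)

section StableExponent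

variable {α : ℝ} {cp cm : ℂ}

theorem measurable_stableExponent : Measurable (stableExponent α cp cm) := by
  refine Measurable.mul (Measurable.ite measurableSet_Ioi measurable_const measurable_const) ?_
  fun_prop

theorem min_re_mul_le_stableExponent_re (θ : ℝ) :
    min cp.re cm.re * |θ| ^ α ≤ (stableExponent α cp cm θ).re := by
  rw [stableExponent, Complex.re_mul_ofReal]
  gcongr
  split_ifs
  exacts [min_le_left _ _, min_le_right _ _]

theorem norm_stableExponent_le (θ : ℝ) :
    ‖stableExponent α cp cm θ‖ ≤ max ‖cp‖ ‖cm‖ * |θ| ^ α := by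
  rw [stableExponent, norm_mul, Complex.norm_of_nonneg (by positivity)]
  gcongr
  split_ifs
  exacts [le_max_left _ _, le_max_right _ _]

theorem exists_mul_add_le_norm_add_stableExponent (hcp : 0 < cp.re) (hcm : 0 < cm.re) :
    ∃ κ > 0, ∀ w : ℂ, 0 ≤ w.re → ∀ θ,
      κ * (‖w‖ + |θ| ^ α) ≤ ‖w + stableExponent α cp cm θ‖ := by
  have hmin : 0 < min cp.re cm.re := lt_min hcp hcm
  have hmax : 0 ≤ max ‖cp‖ ‖cm‖ := (norm_nonneg _).trans (le_max_left _ _)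
  refine ⟨(1 + (1 + max ‖cp‖ ‖cm‖) / min cp.re cm.re)⁻¹, by positivity, fun w hw θ => ?_⟩
  rw [inv_mul_le_iff₀ (by positivity)]
  exact norm_add_le_mul_norm_add_of_re hmin hmax (min_re_mul_le_stableExponent_re θ)
    (norm_stableExponent_le θ) hw

theorem integrable_add_stableExponent_inv_pow (hα : 1 < α) (hcp : 0 < cp.re) (hcm : 0 < cm.re)
    {w : ℂ} (hw : 0 < w.re) (k : ℕ) :
    Integrable fun θ => (w + stableExponent α cp cm θ)⁻¹ ^ (k + 1) := by
  obtain ⟨κ, hκ, hlower⟩ :=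
    exists_mul_add_le_norm_add_stableExponent (α := α) hcp hcm
  have hw0 : 0 < ‖w‖ := hw.trans_le (Complex.re_le_norm w)
  set m := min ‖w‖ 1
  have : 0 < m := lt_min hw0 one_pos
  refine ((integrable_inv_one_add_abs_rpow hα).const_mul ((κ * m)⁻¹ ^ (k + 1))).mono'
    (((measurable_const.add measurable_stableExponent).inv).pow_const _).aestronglyMeasurable
    (Eventually.of_forall fun θ => ?_)
  have hx : 0 ≤ |θ| ^ α := by positivity
  have hle : κ * m * (1 + |θ| ^ α) ≤ ‖w + stableExponent α cp cm θ‖ := by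
    refine le_trans ?_ (hlower w hw.le θ)
    rw [mul_assoc, mul_add, mul_one]
    gcongr
    · exact min_le_left _ _
    · exact mul_le_of_le_one_left hx (min_le_right _ _)
  calc ‖(w + stableExponent α cp cm θ)⁻¹ ^ (k + 1)‖
      ≤ (κ * m * (1 + |θ| ^ α))⁻¹ ^ (k + 1) := by
        rw [norm_pow, norm_inv]
        gcongr
    _ = (κ * m)⁻¹ ^ (k + 1) * (1 + |θ| ^ α)⁻¹ ^ (k + 1) := by rw [mul_inv, mul_pow]
    _ ≤ (κ * m)⁻¹ ^ (k + 1) * (1 + |θ| ^ α)⁻¹ := by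
        gcongr
        exact pow_le_of_le_one (by positivity) (inv_le_one_of_one_le₀ (by linarith))
          k.succ_ne_zero

/-- The constant `Γ(1 + 1/α) Γ(k + 1 - 1/α) / k! · (c₊^{-1/α} + c₋^{-1/α})`, i.e. the integral of
`(1 + stableExponent α c₊ c₋ θ)⁻¹ ^ (k + 1)` over the line. -/
noncomputable def stableResolventConst (α : ℝ) (cp cm : ℂ) (k : ℕ) : ℂ :=
  Complex.Gamma (1 / α + 1) * Complex.Gamma (k + 1 - 1 / α) / Complex.Gamma (k + 1) *
    (cp ^ (-(1 / α) : ℂ) + cm ^ (-(1 / α) : ℂ))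

theorem integral_add_stableExponent_inv_pow (hα : 1 < α) (hcp : 0 < cp.re) (hcm : 0 < cm.re)
    {w : ℂ} (hw : 0 < w.re) (k : ℕ) :
    ∫ θ, (w + stableExponent α cp cm θ)⁻¹ ^ (k + 1) =
      stableResolventConst α cp cm k * w ^ (-(k + 1 - 1 / α) : ℂ) := by
  have hα0 : 0 < α := one_pos.trans hα
  have hk : 1 / α < (k + 1 : ℂ).re := by
    rw [div_lt_iff₀ hα0, Complex.add_re, Complex.natCast_re, Complex.one_re]
    nlinarith [(k.cast_nonneg : (0 : ℝ) ≤ k)]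
  have hcpow : ∀ v : ℂ, v⁻¹ ^ (k + 1) = v ^ (-(k + 1) : ℂ) := fun v => by
    rw [Complex.cpow_neg, inv_pow, ← Nat.cast_succ, Complex.cpow_natCast]
  have hint := integrable_add_stableExponent_inv_pow hα hcp hcm hw k
  rw [← integral_add_compl measurableSet_Ioi hint, Set.compl_Ioi, ← integral_comp_neg_Ioi,
    neg_zero]
  have hright : ∀ θ ∈ Set.Ioi (0 : ℝ), (w + stableExponent α cp cm θ)⁻¹ ^ (k + 1) =
      (w + cp * (θ ^ α : ℝ)) ^ (-(k + 1) : ℂ) := fun θ (hθ : 0 < θ) => by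
    rw [hcpow, stableExponent, if_pos hθ, abs_of_pos hθ]
  have hleft : ∀ θ ∈ Set.Ioi (0 : ℝ), (w + stableExponent α cp cm (-θ))⁻¹ ^ (k + 1) =
      (w + cm * (θ ^ α : ℝ)) ^ (-(k + 1) : ℂ) := fun θ (hθ : 0 < θ) => by
    rw [hcpow, stableExponent, if_neg (by linarith), abs_neg, abs_of_pos hθ]
  rw [setIntegral_congr_fun measurableSet_Ioi hright,
    setIntegral_congr_fun measurableSet_Ioi hleft,
    integral_add_mul_rpow_cpow_neg hα0 hk hw hcp, integral_add_mul_rpow_cpow_neg hα0 hk hw hcm,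
    stableResolventConst]
  ring

end StableExponent

/-- A symbol on `[-π, π]` for which `1 - φ` vanishes only at `0`, where it behaves like the
exponent of an `α`-stable law: `1 - φ θ ~ c₊ |θ|^α` as `θ ↓ 0` and `1 - φ θ ~ c₋ |θ|^α` as
`θ ↑ 0`. -/
structure IsStableSymbol (φ : ℝ → ℂ) (α : ℝ) (cp cm : ℂ) : Prop where
  continuous : Continuous φ
  apply_zero : φ 0 = 1
  norm_lt_one : ∀ θ, |θ| ≤ π → θ ≠ 0 → ‖φ θ‖ < 1
  one_lt : 1 < α
  re_pos_right : 0 < cp.re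
  re_pos_left : 0 < cm.re
  tendsto_right : Tendsto (fun θ => (1 - φ θ) / (|θ| ^ α : ℝ)) (𝓝[>] 0) (𝓝 cp)
  tendsto_left : Tendsto (fun θ => (1 - φ θ) / (|θ| ^ α : ℝ)) (𝓝[<] 0) (𝓝 cm)

namespace IsStableSymbol

variable {φ : ℝ → ℂ} {α : ℝ} {cp cm : ℂ}

theorem alpha_pos (h : IsStableSymbol φ α cp cm) : 0 < α := one_pos.trans h.one_lt

theorem norm_le_one (h : IsStableSymbol φ α cp cm) {θ : ℝ} (hθ : |θ| ≤ π) : ‖φ θ‖ ≤ 1 := by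
  rcases eq_or_ne θ 0 with rfl | hne
  · simp [h.apply_zero]
  · exact (h.norm_lt_one θ hθ hne).le

theorem isLittleO_one_sub_sub_stableExponent (h : IsStableSymbol φ α cp cm) :
    (fun θ => 1 - φ θ - stableExponent α cp cm θ) =o[𝓝 0] fun θ => |θ| ^ α := by
  have hside : ∀ {s : Set ℝ} {c : ℂ}, (∀ θ ∈ s, θ ≠ 0) →
      (∀ θ ∈ s, stableExponent α cp cm θ = c * (|θ| ^ α : ℝ)) →
      Tendsto (fun θ => (1 - φ θ) / (|θ| ^ α : ℝ)) (𝓝[s] 0) (𝓝 c) →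
      (fun θ => 1 - φ θ - stableExponent α cp cm θ) =o[𝓝[s] 0] fun θ => |θ| ^ α := by
    intro s c hne hc hlim
    have hdiff := (isLittleO_one_iff ℂ).2 (tendsto_sub_nhds_zero_iff.2 hlim)
    refine Complex.isLittleO_ofReal_right.1
      ((hdiff.mul_isBigO (isBigO_refl (fun θ => ((|θ| ^ α : ℝ) : ℂ)) _)).congr' ?_ (by simp))
    filter_upwards [self_mem_nhdsWithin] with θ hθ
    have hpow : ((|θ| ^ α : ℝ) : ℂ) ≠ 0 :=
      Complex.ofReal_ne_zero.2 (Real.rpow_pos_of_pos (abs_pos.2 (hne θ hθ)) α).ne'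
    rw [hc θ hθ]
    field_simp
  rw [← pure_sup_nhdsNE, ← nhdsLT_sup_nhdsGT]
  refine .sup ?_ (.sup (hside (fun θ hθ => (Set.mem_Iio.1 hθ).ne) (fun θ hθ => ?_) h.tendsto_left)
    (hside (fun θ hθ => (Set.mem_Ioi.1 hθ).ne') (fun θ hθ => ?_) h.tendsto_right))
  · exact isLittleO_pure.2 (by simp [h.apply_zero, stableExponent, h.alpha_pos.ne'])
  · rw [stableExponent, if_neg (Set.mem_Iio.1 hθ).not_gt]
  · rw [stableExponent, if_pos (Set.mem_Ioi.1 hθ)]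

theorem isLittleO_inv_sub_one_sub_stableExponent (h : IsStableSymbol φ α cp cm) :
    (fun θ => (φ θ)⁻¹ - 1 - stableExponent α cp cm θ) =o[𝓝 0] fun θ => |θ| ^ α := by
  have hinv : Tendsto (fun θ => (φ θ)⁻¹) (𝓝 0) (𝓝 1) := by
    simpa [h.apply_zero] using
      h.continuous.continuousAt.tendsto.inv₀ (by simp [h.apply_zero] : φ 0 ≠ 0)
  have hO : stableExponent α cp cm =O[𝓝 0] fun θ => |θ| ^ α :=
    .of_bound (max ‖cp‖ ‖cm‖) (Eventually.of_forall fun θ => by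
      simpa [abs_of_nonneg (Real.rpow_nonneg (abs_nonneg θ) α)] using norm_stableExponent_le θ)
  have hfirst := h.isLittleO_one_sub_sub_stableExponent.norm_right.mul_isBigO
    (hinv.isBigO_one ℝ)
  have hsecond := hO.norm_right.mul_isLittleO
    ((isLittleO_one_iff ℝ).2 (tendsto_sub_nhds_zero_iff.2 hinv))
  refine IsLittleO.of_norm_right ((hfirst.add hsecond).congr' ?_ (by simp))
  filter_upwards [h.continuous.continuousAt.eventually_ne
    (by simp [h.apply_zero] : φ 0 ≠ 0)] with θ hθ
  field_simp
  ring

theorem exists_mul_add_le_norm_one_sub_mul_nhds (h : IsStableSymbol φ α cp cm) :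
    ∃ κ > 0, ∀ᶠ θ in 𝓝 0, ∀ z : ℂ, ‖z‖ < 1 →
      κ * (‖1 - z‖ + |θ| ^ α) ≤ ‖1 - z * φ θ‖ := by
  set m := min cp.re cm.re
  set M := max ‖cp‖ ‖cm‖
  have hm : 0 < m := lt_min h.re_pos_right h.re_pos_left
  have : 0 ≤ M := (norm_nonneg _).trans (le_max_left _ _)
  have hhalf : ∀ᶠ θ in 𝓝 0, 1 / 2 < ‖φ θ‖ :=
    h.continuous.norm.continuousAt.eventually_const_lt (by norm_num [h.apply_zero])
  refine ⟨1 / 2 * (1 + (1 + (M + m / 2)) / (m / 2))⁻¹, by positivity, ?_⟩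
  filter_upwards [hhalf, h.isLittleO_inv_sub_one_sub_stableExponent.def (half_pos hm)]
    with θ hφ herr z hz
  rw [Real.norm_of_nonneg (by positivity)] at herr
  have hre : m / 2 * |θ| ^ α ≤ ((φ θ)⁻¹ - 1).re := by
    have := (Complex.abs_re_le_norm _).trans herr
    rw [Complex.sub_re _ (stableExponent α cp cm θ)] at this
    linarith [abs_le.1 this, min_re_mul_le_stableExponent_re (α := α) (cp := cp) (cm := cm) θ]
  have hnorm : ‖(φ θ)⁻¹ - 1‖ ≤ (M + m / 2) * |θ| ^ α := by
    linarith [norm_sub_norm_le ((φ θ)⁻¹ - 1) (stableExponent α cp cm θ),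
      norm_stableExponent_le (α := α) (cp := cp) (cm := cm) θ]
  have hz' : 0 ≤ (1 - z).re := by
    rw [Complex.sub_re, Complex.one_re]
    linarith [Complex.re_le_norm z]
  have hφ0 : φ θ ≠ 0 := norm_pos_iff.1 (by linarith)
  have hfactor : 1 - z * φ θ = φ θ * (1 - z + ((φ θ)⁻¹ - 1)) := by field_simp; ring
  have hsector := norm_add_le_mul_norm_add_of_re (half_pos hm) (by positivity) hre hnorm hz'
  rw [hfactor, norm_mul, mul_assoc]
  gcongr
  rwa [inv_mul_le_iff₀ (by positivity)]

theorem exists_norm_le_of_le_abs (h : IsStableSymbol φ α cp cm) {δ : ℝ} (hδ : 0 < δ) :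
    ∃ r < 1, ∀ θ, δ ≤ |θ| → |θ| ≤ π → ‖φ θ‖ ≤ r := by
  have hcompact : IsCompact {θ : ℝ | δ ≤ |θ| ∧ |θ| ≤ π} := by
    refine isCompact_Icc.of_isClosed_subset (s := Set.Icc (-π) π) ?_ fun θ hθ => abs_le.1 hθ.2
    exact (isClosed_le continuous_const continuous_abs).inter
      (isClosed_le continuous_abs continuous_const)
  rcases Set.eq_empty_or_nonempty {θ : ℝ | δ ≤ |θ| ∧ |θ| ≤ π} with hempty | hne
  · exact ⟨0, one_pos, fun θ h₁ h₂ => (Set.eq_empty_iff_forall_notMem.1 hempty θ ⟨h₁, h₂⟩).elim⟩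
  · obtain ⟨θ₀, hθ₀, hmax⟩ := hcompact.exists_isMaxOn hne h.continuous.norm.continuousOn
    exact ⟨‖φ θ₀‖, h.norm_lt_one θ₀ hθ₀.2 (abs_pos.1 (hδ.trans_le hθ₀.1)),
      fun θ h₁ h₂ => hmax ⟨h₁, h₂⟩⟩

theorem exists_mul_add_le_norm_one_sub_mul (h : IsStableSymbol φ α cp cm) :
    ∃ κ > 0, ∀ z : ℂ, ‖z‖ < 1 → ∀ θ, |θ| ≤ π →
      κ * (‖1 - z‖ + |θ| ^ α) ≤ ‖1 - z * φ θ‖ := by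
  obtain ⟨κ, hκ, hnear⟩ := h.exists_mul_add_le_norm_one_sub_mul_nhds
  obtain ⟨δ, hδ, hnear⟩ := Metric.eventually_nhds_iff.1 hnear
  obtain ⟨r, hr, hfar⟩ := h.exists_norm_le_of_le_abs hδ
  have : 0 < 1 - r := sub_pos.2 hr
  refine ⟨min κ ((1 - r) / (2 + π ^ α)), by positivity, fun z hz θ hθ => ?_⟩
  rcases lt_or_ge |θ| δ with hlt | hge
  · refine le_trans ?_ (hnear (by simpa using hlt) z hz)
    gcongr
    exact min_le_left _ _
  · have hone : ‖1 - z‖ ≤ 2 := (norm_sub_le _ _).trans (by rw [norm_one]; linarith)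
    calc min κ ((1 - r) / (2 + π ^ α)) * (‖1 - z‖ + |θ| ^ α)
        ≤ (1 - r) / (2 + π ^ α) * (2 + π ^ α) := by
          have := h.alpha_pos
          gcongr
          exact min_le_right _ _
      _ = 1 - r := div_mul_cancel₀ _ (by positivity)
      _ ≤ 1 - ‖z * φ θ‖ := by
          rw [norm_mul]
          gcongr
          exact (mul_le_of_le_one_left (norm_nonneg _) hz.le).trans (hfar θ hge hθ)
      _ ≤ ‖1 - z * φ θ‖ := by simpa using norm_sub_norm_le 1 (z * φ θ)

end IsStableSymbol

theorem norm_pow_succ_smul_inv_pow_le {ρ κ x : ℝ} {v : ℂ} (hρ : 0 < ρ) (hκ : 0 < κ) (hx : 0 ≤ x)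
    (hv : κ * (ρ + ρ * x) ≤ ‖v‖) (k : ℕ) :
    ‖ρ ^ (k + 1) • v⁻¹ ^ (k + 1)‖ ≤ κ⁻¹ ^ (k + 1) * (1 + x)⁻¹ := by
  calc ‖ρ ^ (k + 1) • v⁻¹ ^ (k + 1)‖
      = ‖ρ • v⁻¹‖ ^ (k + 1) := by rw [← smul_pow, norm_pow]
    _ ≤ (κ * (1 + x))⁻¹ ^ (k + 1) := by
        gcongr
        exact norm_smul_inv_le hρ (by positivity) (by linarith)
    _ = κ⁻¹ ^ (k + 1) * (1 + x)⁻¹ ^ (k + 1) := by rw [mul_inv, mul_pow]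
    _ ≤ κ⁻¹ ^ (k + 1) * (1 + x)⁻¹ := by
        gcongr
        exact pow_le_of_le_one (by positivity) (inv_le_one_of_one_le₀ (by linarith))
          k.succ_ne_zero

/-- The difference between the integrand of `resolventIntegral`, cut off to `[-π, π]`, and its
homogeneous model on the whole line. -/
noncomputable def resolventError (φ : ℝ → ℂ) (α : ℝ) (cp cm : ℂ) (k : ℕ) (z : ℂ) (θ : ℝ) : ℂ :=
  (Set.Ioc (-π) π).indicator (resolventPow φ k z) θ -
    (1 - z + stableExponent α cp cm θ)⁻¹ ^ (k + 1)

namespace IsStableSymbol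

variable {φ : ℝ → ℂ} {α : ℝ} {cp cm : ℂ}

theorem rescaled_abs_rpow (h : IsStableSymbol φ α cp cm) {ρ : ℝ} (hρ : 0 < ρ) (t : ℝ) :
    |ρ ^ (1 / α) * t| ^ α = ρ * |t| ^ α := by
  rw [abs_mul, abs_of_pos (Real.rpow_pos_of_pos hρ _),
    Real.mul_rpow (by positivity) (abs_nonneg t), ← Real.rpow_mul hρ.le,
    one_div_mul_cancel h.alpha_pos.ne', Real.rpow_one]

theorem exists_rescaled_lower_bound (h : IsStableSymbol φ α cp cm) :
    ∃ κ > 0, ∀ z : ℂ, ‖z‖ < 1 → ∀ t,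
      κ * (‖1 - z‖ + ‖1 - z‖ * |t| ^ α) ≤
          ‖1 - z + stableExponent α cp cm (‖1 - z‖ ^ (1 / α) * t)‖ ∧
        (|‖1 - z‖ ^ (1 / α) * t| ≤ π → κ * (‖1 - z‖ + ‖1 - z‖ * |t| ^ α) ≤
          ‖1 - z * φ (‖1 - z‖ ^ (1 / α) * t)‖) := by
  obtain ⟨κ, hκ, hsymbol⟩ := h.exists_mul_add_le_norm_one_sub_mul
  obtain ⟨κ', hκ', hmodel⟩ := exists_mul_add_le_norm_add_stableExponent (α := α)
    h.re_pos_right h.re_pos_left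
  refine ⟨min κ κ', lt_min hκ hκ', fun z hz t => ?_⟩
  have hre : 0 ≤ (1 - z).re := by
    rw [Complex.sub_re, Complex.one_re]
    linarith [Complex.re_le_norm z]
  rw [← h.rescaled_abs_rpow (norm_one_sub_pos hz)]
  refine ⟨le_trans ?_ (hmodel _ hre _), fun hπ => le_trans ?_ (hsymbol z hz _ hπ)⟩
  · gcongr
    exact min_le_right _ _
  · gcongr
    exact min_le_left _ _

theorem exists_norm_smul_resolventError_le (h : IsStableSymbol φ α cp cm) (k : ℕ) :
    ∃ K, ∀ z : ℂ, ‖z‖ < 1 → ∀ t,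
      ‖‖1 - z‖ ^ (k + 1) • resolventError φ α cp cm k z (‖1 - z‖ ^ (1 / α) * t)‖ ≤
        K * (1 + |t| ^ α)⁻¹ := by
  obtain ⟨κ, hκ, hlower⟩ := h.exists_rescaled_lower_bound
  refine ⟨κ⁻¹ ^ (k + 1) + κ⁻¹ ^ (k + 1), fun z hz t => ?_⟩
  have hρ := norm_one_sub_pos hz
  have hx : 0 ≤ |t| ^ α := by positivity
  obtain ⟨hmodel, hsymbol⟩ := hlower z hz t
  rw [resolventError, smul_sub, add_mul]
  refine (norm_sub_le _ _).trans
    (add_le_add ?_ (norm_pow_succ_smul_inv_pow_le hρ hκ hx hmodel k))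
  by_cases hmem : ‖1 - z‖ ^ (1 / α) * t ∈ Set.Ioc (-π) π
  · have habs : |‖1 - z‖ ^ (1 / α) * t| ≤ π := abs_le.2 ⟨hmem.1.le, hmem.2⟩
    rw [Set.indicator_of_mem hmem, resolventPow, ← mul_smul_comm, norm_mul, norm_pow]
    refine (mul_le_of_le_one_left (norm_nonneg _)
      (pow_le_one₀ (norm_nonneg _) (h.norm_le_one habs))).trans ?_
    exact norm_pow_succ_smul_inv_pow_le hρ hκ hx (hsymbol habs) k
  · rw [Set.indicator_of_notMem hmem, smul_zero, norm_zero]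
    positivity

theorem tendsto_rescaled_zero (h : IsStableSymbol φ α cp cm) (t : ℝ) :
    Tendsto (fun z : ℂ => ‖1 - z‖ ^ (1 / α) * t) (𝓝 1) (𝓝 0) := by
  have hcont : Continuous fun z : ℂ => ‖1 - z‖ ^ (1 / α) * t :=
    ((continuous_const.sub continuous_id).norm.rpow_const
      fun _ => Or.inr (one_div_pos.2 h.alpha_pos).le).mul_const t
  simpa [h.alpha_pos.ne'] using hcont.tendsto 1

theorem isLittleO_model_sub_one_sub_mul (h : IsStableSymbol φ α cp cm) (t : ℝ) :
    (fun z : ℂ => 1 - z + stableExponent α cp cm (‖1 - z‖ ^ (1 / α) * t) -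
      (1 - z * φ (‖1 - z‖ ^ (1 / α) * t))) =o[𝓝[≠] 1] fun z => ‖1 - z‖ := by
  have hθ := (h.tendsto_rescaled_zero t).mono_left (nhdsWithin_le_nhds (s := {1}ᶜ))
  have hexponent : (fun z : ℂ => 1 - φ (‖1 - z‖ ^ (1 / α) * t) -
      stableExponent α cp cm (‖1 - z‖ ^ (1 / α) * t)) =o[𝓝[≠] 1] fun z => ‖1 - z‖ := by
    refine (h.isLittleO_one_sub_sub_stableExponent.comp_tendsto hθ).trans_isBigO ?_
    refine .of_bound (|t| ^ α) (eventually_mem_nhdsWithin.mono fun z hz => ?_)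
    have hρ : 0 < ‖1 - z‖ := norm_pos_iff.2 (sub_ne_zero.2 (Ne.symm hz))
    rw [Function.comp_apply, h.rescaled_abs_rpow hρ, Real.norm_of_nonneg (by positivity),
      norm_norm, mul_comm]
  have hφ : Tendsto (fun z : ℂ => 1 - φ (‖1 - z‖ ^ (1 / α) * t)) (𝓝[≠] 1) (𝓝 0) := by
    simpa [h.apply_zero] using ((h.continuous.tendsto 0).comp hθ).const_sub 1
  have hproduct := ((isBigO_refl (fun z : ℂ => 1 - z) (𝓝[≠] 1)).norm_right.mul_isLittleO
    ((isLittleO_one_iff ℝ).2 hφ))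
  refine ((hproduct.congr_right fun z => mul_one _).sub hexponent).congr_left fun z => ?_
  ring

theorem eventually_rescaled_mem_Ioo (h : IsStableSymbol φ α cp cm) (t : ℝ) :
    ∀ᶠ z : ℂ in 𝓝[Metric.ball 0 1] 1, ‖1 - z‖ ^ (1 / α) * t ∈ Set.Ioo (-π) π :=
  (h.tendsto_rescaled_zero t).mono_left nhdsWithin_le_nhds
    (Ioo_mem_nhds (neg_lt_zero.2 Real.pi_pos) Real.pi_pos)

theorem exists_eventually_mul_norm_one_sub_le (h : IsStableSymbol φ α cp cm) (t : ℝ) :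
    ∃ κ > 0, ∀ᶠ z : ℂ in 𝓝[Metric.ball 0 1] 1, 0 < ‖1 - z‖ ∧
      κ * ‖1 - z‖ ≤ ‖1 - z * φ (‖1 - z‖ ^ (1 / α) * t)‖ ∧
      κ * ‖1 - z‖ ≤ ‖1 - z + stableExponent α cp cm (‖1 - z‖ ^ (1 / α) * t)‖ := by
  obtain ⟨κ, hκ, hlower⟩ := h.exists_rescaled_lower_bound
  refine ⟨κ, hκ, ?_⟩
  filter_upwards [eventually_mem_nhdsWithin, h.eventually_rescaled_mem_Ioo t] with z hz hθ
  have hz := mem_ball_zero_iff.1 hz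
  have hle : κ * ‖1 - z‖ ≤ κ * (‖1 - z‖ + ‖1 - z‖ * |t| ^ α) := by
    gcongr
    exact le_add_of_nonneg_right (by positivity)
  exact ⟨norm_one_sub_pos hz, hle.trans ((hlower z hz t).2 (abs_le.2 ⟨hθ.1.le, hθ.2.le⟩)),
    hle.trans (hlower z hz t).1⟩

theorem tendsto_smul_resolventError (h : IsStableSymbol φ α cp cm) (k : ℕ) (t : ℝ) :
    Tendsto (fun z : ℂ =>
      ‖1 - z‖ ^ (k + 1) • resolventError φ α cp cm k z (‖1 - z‖ ^ (1 / α) * t))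
      (𝓝[Metric.ball 0 1] 1) (𝓝 0) := by
  obtain ⟨κ, hκ, hlower⟩ := h.exists_eventually_mul_norm_one_sub_le t
  have hθ := (h.tendsto_rescaled_zero t).mono_left (nhdsWithin_le_nhds (s := Metric.ball 0 1))
  have hball : 𝓝[Metric.ball 0 1] (1 : ℂ) ≤ 𝓝[≠] 1 :=
    nhdsWithin_mono 1 fun z hz => by rintro rfl; simp at hz
  have hmodel := tendsto_smul_inv_pow_sub_zero hκ (hlower.mono fun z hz => hz.1)
    (hlower.mono fun z hz => hz.2.1) (hlower.mono fun z hz => hz.2.2)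
    ((h.isLittleO_model_sub_one_sub_mul t).mono hball) (k + 1)
  have hφ : Tendsto (fun z : ℂ => φ (‖1 - z‖ ^ (1 / α) * t) ^ k - 1)
      (𝓝[Metric.ball 0 1] 1) (𝓝 0) := by
    simpa [h.apply_zero] using (((h.continuous.tendsto 0).comp hθ).pow k).sub_const 1
  have hbound : ∀ᶠ z : ℂ in 𝓝[Metric.ball 0 1] 1,
      ‖‖1 - z‖ ^ (k + 1) • (1 - z * φ (‖1 - z‖ ^ (1 / α) * t))⁻¹ ^ (k + 1)‖ ≤
        κ⁻¹ ^ (k + 1) := by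
    filter_upwards [hlower] with z hz
    rw [← smul_pow, norm_pow]
    gcongr
    exact norm_smul_inv_le hz.1 hκ hz.2.1
  have hpow := isBoundedUnder_le_mul_tendsto_zero ⟨_, eventually_map.2 hbound⟩ hφ
  have hsum := hpow.add hmodel
  rw [add_zero] at hsum
  refine hsum.congr' ?_
  filter_upwards [h.eventually_rescaled_mem_Ioo t] with z hz
  rw [resolventError, Set.indicator_of_mem (Set.Ioo_subset_Ioc_self hz), resolventPow]
  simp only [Complex.real_smul]
  ring

theorem stronglyMeasurable_resolventError (h : IsStableSymbol φ α cp cm) (k : ℕ) (z : ℂ) :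
    StronglyMeasurable (resolventError φ α cp cm k z) := by
  have hφ := h.continuous.measurable
  have hsymbol : Measurable (resolventPow φ k z) :=
    (hφ.pow_const k).mul ((measurable_const.sub (hφ.const_mul z)).inv.pow_const (k + 1))
  exact ((hsymbol.indicator measurableSet_Ioc).sub
    ((measurable_const.add measurable_stableExponent).inv.pow_const (k + 1))).stronglyMeasurable

theorem integral_resolventError (h : IsStableSymbol φ α cp cm) (k : ℕ) {z : ℂ} (hz : ‖z‖ < 1) :
    ∫ θ, resolventError φ α cp cm k z θ = resolventIntegral φ k z -
      stableResolventConst α cp cm k * (1 - z) ^ (-(k + 1 - 1 / α) : ℂ) := by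
  have hre : 0 < (1 - z).re := by
    rw [Complex.sub_re, Complex.one_re]
    linarith [Complex.re_le_norm z]
  have hint : IntegrableOn (resolventPow φ k z) (Set.Ioc (-π) π) :=
    (continuousOn_resolventPow h.continuous (fun _ => h.norm_le_one) hz k).integrableOn_Icc.mono_set
      Set.Ioc_subset_Icc_self
  rw [resolventIntegral, intervalIntegral.integral_of_le (by linarith [Real.pi_pos]),
    ← integral_indicator measurableSet_Ioc,
    ← integral_add_stableExponent_inv_pow h.one_lt h.re_pos_right h.re_pos_left hre k]
  exact integral_sub (hint.integrable_indicator measurableSet_Ioc)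
    (integrable_add_stableExponent_inv_pow h.one_lt h.re_pos_right h.re_pos_left hre k)

theorem tendsto_resolventIntegral_mul_cpow (h : IsStableSymbol φ α cp cm) (k : ℕ) :
    Tendsto (fun z => resolventIntegral φ k z * (1 - z) ^ ((k + 1 : ℂ) - 1 / α))
      (𝓝[Metric.ball 0 1] 1) (𝓝 (stableResolventConst α cp cm k)) := by
  have hball : ∀ᶠ z : ℂ in 𝓝[Metric.ball 0 1] 1, ‖z‖ < 1 :=
    eventually_mem_nhdsWithin.mono fun z hz => mem_ball_zero_iff.1 hz
  obtain ⟨K, hK⟩ := h.exists_norm_smul_resolventError_le k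
  have herror := tendsto_smul_integral_of_rescaled_dominated
    (δ := fun z : ℂ => ‖1 - z‖ ^ (1 / α))
    (hball.mono fun z hz => Real.rpow_pos_of_pos (norm_one_sub_pos hz) _)
    ((integrable_inv_one_add_abs_rpow h.one_lt).const_mul K)
    (Eventually.of_forall fun z => h.stronglyMeasurable_resolventError k z)
    (hball.mono fun z hz => hK z hz)
    (Eventually.of_forall fun t => h.tendsto_smul_resolventError k t)
  refine tendsto_sub_nhds_zero_iff.1 (squeeze_zero_norm' ?_ (tendsto_norm_zero.comp herror))
  filter_upwards [hball] with z hz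
  have hρ := norm_one_sub_pos hz
  have hw : 1 - z ≠ 0 := norm_pos_iff.1 hρ
  have hfactor : resolventIntegral φ k z * (1 - z) ^ ((k + 1 : ℂ) - 1 / α) -
      stableResolventConst α cp cm k =
      (∫ θ, resolventError φ α cp cm k z θ) * (1 - z) ^ ((k + 1 : ℂ) - 1 / α) := by
    rw [h.integral_resolventError k hz, sub_mul, mul_assoc, ← Complex.cpow_add _ _ hw,
      neg_add_cancel, Complex.cpow_zero, mul_one]
  have hexp : (k + 1 : ℂ) - 1 / α = ((k + 1 - 1 / α : ℝ) : ℂ) := by push_cast; ring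
  rw [hfactor, hexp, norm_mul, Complex.norm_cpow_real, Function.comp_apply, norm_smul, mul_comm,
    Real.norm_of_nonneg (by positivity), Real.rpow_sub hρ, ← Nat.cast_succ, Real.rpow_natCast]

end IsStableSymbol

theorem cpow_ofReal_re_pos {c : ℂ} (hc : 0 < c.re) {r : ℝ} (hr : |r| ≤ 1) :
    0 < (c ^ (r : ℂ)).re := by
  have harg := Complex.abs_arg_lt_pi_div_two_iff.2 (Or.inl hc)
  have hmul : |c.arg * r| < π / 2 := by
    rw [abs_mul]
    exact (mul_le_of_le_one_right (abs_nonneg _) hr).trans_lt harg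
  have hnorm : 0 < ‖c‖ := hc.trans_le (Complex.re_le_norm c)
  rw [Complex.cpow_ofReal_re]
  exact mul_pos (Real.rpow_pos_of_pos hnorm r) (Real.cos_pos_of_mem_Ioo (abs_lt.1 hmul))

theorem natCast_add_one_sub_one_div_re_pos {α : ℝ} (hα : 1 < α) (k : ℕ) :
    0 < (k + 1 - 1 / α : ℂ).re := by
  have hlt : 1 / α < 1 := (div_lt_one (by linarith)).2 hα
  have hcast : (k + 1 - 1 / α : ℂ) = ((k + 1 - 1 / α : ℝ) : ℂ) := by push_cast; rfl
  rw [hcast, Complex.ofReal_re]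
  linarith [(Nat.cast_nonneg k : (0 : ℝ) ≤ k)]

theorem stableResolventConst_succ {α : ℝ} (hα : 1 < α) (cp cm : ℂ) (k : ℕ) :
    stableResolventConst α cp cm (k + 1) =
      (k + 1 - 1 / α) / (k + 1) * stableResolventConst α cp cm k := by
  have hne : (k + 1 - 1 / α : ℂ) ≠ 0 := fun h₀ =>
    (natCast_add_one_sub_one_div_re_pos hα k).ne' (by rw [h₀, Complex.zero_re])
  have hk : (k + 1 : ℂ) ≠ 0 := k.cast_add_one_ne_zero
  have hsucc : ((k + 1 : ℕ) : ℂ) + 1 - 1 / α = k + 1 - 1 / α + 1 := by push_cast; ring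
  rw [stableResolventConst, stableResolventConst, hsucc, Complex.Gamma_add_one _ hne,
    Nat.cast_succ, Complex.Gamma_add_one _ hk]
  field_simp

/-- The second derivative of `1 - 2π / resolventIntegral φ 0`, the generating function of the
first-return probabilities; unlike the function itself it blows up at `z = 1`. -/
noncomputable def returnGenDeriv₂ (φ : ℝ → ℂ) (z : ℂ) : ℂ :=
  4 * π * (resolventIntegral φ 2 z / resolventIntegral φ 0 z ^ 2 -
    resolventIntegral φ 1 z ^ 2 / resolventIntegral φ 0 z ^ 3)

theorem hasDerivAt_one_sub_div_resolventIntegral {φ : ℝ → ℂ} (hφ : Continuous φ)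
    (hle : ∀ θ, |θ| ≤ π → ‖φ θ‖ ≤ 1) {z : ℂ} (hz : ‖z‖ < 1) :
    HasDerivAt (fun z => 1 - 2 * π / resolventIntegral φ 0 z)
      (2 * π * (resolventIntegral φ 1 z / resolventIntegral φ 0 z ^ 2)) z := by
  have hU := resolventIntegral_zero_ne_zero hφ hle hz
  refine ((((hasDerivAt_resolventIntegral hφ hle hz 0).fun_inv hU).const_mul
    (2 * π : ℂ)).const_sub 1).congr_deriv ?_
  rw [Nat.cast_zero, zero_add, zero_add]
  ring

theorem hasDerivAt_returnGenDeriv₂ {φ : ℝ → ℂ} (hφ : Continuous φ)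
    (hle : ∀ θ, |θ| ≤ π → ‖φ θ‖ ≤ 1) {z : ℂ} (hz : ‖z‖ < 1) :
    HasDerivAt (fun z => 2 * π * (resolventIntegral φ 1 z / resolventIntegral φ 0 z ^ 2))
      (returnGenDeriv₂ φ z) z := by
  have hU := resolventIntegral_zero_ne_zero hφ hle hz
  refine (((hasDerivAt_resolventIntegral hφ hle hz 1).fun_div
    ((hasDerivAt_resolventIntegral hφ hle hz 0).fun_pow 2) (pow_ne_zero 2 hU)).const_mul
    (2 * π : ℂ)).congr_deriv ?_
  rw [returnGenDeriv₂]
  push_cast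
  field_simp
  ring

theorem tendsto_div_rpow_sub_one {f : ℕ → ℂ} {s : ℝ} {D : ℂ}
    (hf : Tendsto (fun n : ℕ => (n + 1) * f (n + 1) / ((n : ℝ) ^ s : ℝ)) atTop (𝓝 D)) :
    Tendsto (fun n : ℕ => f n / ((n : ℝ) ^ (s - 1) : ℝ)) atTop (𝓝 D) := by
  have hratio : Tendsto (fun n : ℕ => (((n / (n + 1) : ℝ) ^ s : ℝ) : ℂ)) atTop (𝓝 1) := by
    have hreal := (tendsto_natCast_div_add_atTop (1 : ℝ)).rpow_const (p := s)
      (Or.inl one_ne_zero)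
    rw [Real.one_rpow] at hreal
    exact_mod_cast (Complex.continuous_ofReal.tendsto 1).comp hreal
  rw [← tendsto_add_atTop_iff_nat 1, ← mul_one D]
  refine (hf.mul hratio).congr' ((eventually_gt_atTop 0).mono fun n hn => ?_)
  have hn' : (0 : ℝ) < n := Nat.cast_pos.2 hn
  have hpow : (((n : ℝ) ^ s : ℝ) : ℂ) ≠ 0 := Complex.ofReal_ne_zero.2 (by positivity)
  have hpow' : (((n + 1 : ℝ) ^ s : ℝ) : ℂ) ≠ 0 := Complex.ofReal_ne_zero.2 (by positivity)
  have hsucc : (n + 1 : ℂ) ≠ 0 := n.cast_add_one_ne_zero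
  beta_reduce
  rw [Real.div_rpow hn'.le (by positivity), Nat.cast_add_one, Real.rpow_sub_one (by positivity)]
  push_cast
  field_simp

namespace IsStableSymbol

variable {φ : ℝ → ℂ} {α : ℝ} {cp cm : ℂ}

theorem stableResolventConst_zero_ne_zero (h : IsStableSymbol φ α cp cm) :
    stableResolventConst α cp cm 0 ≠ 0 := by
  have hα := h.alpha_pos
  have hexp : |-(1 / α)| ≤ 1 := by
    rw [abs_neg, abs_of_pos (one_div_pos.2 hα), div_le_one hα]
    exact h.one_lt.le
  have hsum : 0 < (cp ^ ((-(1 / α) : ℝ) : ℂ) + cm ^ ((-(1 / α) : ℝ) : ℂ)).re :=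
    add_pos (cpow_ofReal_re_pos h.re_pos_right hexp) (cpow_ofReal_re_pos h.re_pos_left hexp)
  have hΓ : Complex.Gamma (1 / α + 1) ≠ 0 := by
    refine Complex.Gamma_ne_zero_of_re_pos ?_
    rw [Complex.add_re, ← Complex.ofReal_one, ← Complex.ofReal_div, Complex.ofReal_re,
      Complex.ofReal_re]
    positivity
  push_cast at hsum
  refine mul_ne_zero (div_ne_zero (mul_ne_zero hΓ
    (Complex.Gamma_ne_zero_of_re_pos
      (natCast_add_one_sub_one_div_re_pos h.one_lt 0))) (by simp)) fun h₀ => ?_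
  rw [h₀, Complex.zero_re] at hsum
  exact lt_irrefl 0 hsum

theorem exists_norm_resolventIntegral_le (h : IsStableSymbol φ α cp cm) {δ : ℝ} (hδ : 0 < δ)
    (k : ℕ) : ∃ K, ∀ z : ℂ, ‖z‖ < 1 → δ ≤ ‖1 - z‖ → ‖resolventIntegral φ k z‖ ≤ K := by
  obtain ⟨κ, hκ, hlower⟩ := h.exists_mul_add_le_norm_one_sub_mul
  refine ⟨(κ * δ)⁻¹ ^ (k + 1) * |π - -π|, fun z hz hδz =>
    intervalIntegral.norm_integral_le_of_norm_le_const fun θ hθ => ?_⟩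
  rw [Set.uIoc_of_le (by linarith [Real.pi_pos])] at hθ
  have habs : |θ| ≤ π := abs_le.2 ⟨hθ.1.le, hθ.2⟩
  refine norm_resolventPow_le (mul_pos hκ hδ) (h.norm_le_one habs) (le_trans ?_
    (hlower z hz θ habs)) k
  gcongr
  exact hδz.trans (le_add_of_nonneg_right (by positivity))

theorem exists_norm_returnGenDeriv₂_le (h : IsStableSymbol φ α cp cm) {δ : ℝ} (hδ : 0 < δ) :
    ∃ K, ∀ z : ℂ, ‖z‖ < 1 → δ ≤ ‖1 - z‖ → ‖returnGenDeriv₂ φ z‖ ≤ K := by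
  obtain ⟨K₁, hK₁⟩ := h.exists_norm_resolventIntegral_le hδ 1
  obtain ⟨K₂, hK₂⟩ := h.exists_norm_resolventIntegral_le hδ 2
  refine ⟨4 * π * (K₂ / π ^ 2 + K₁ ^ 2 / π ^ 3), fun z hz hδz => ?_⟩
  have hπ := Real.pi_pos
  have hU : π ≤ ‖resolventIntegral φ 0 z‖ :=
    (pi_le_resolventIntegral_zero_re h.continuous (fun _ => h.norm_le_one) hz).trans
      (Complex.re_le_norm _)
  have hK : 0 ≤ K₂ := (norm_nonneg _).trans (hK₂ z hz hδz)
  have hnorm : ‖(4 * π : ℂ)‖ = 4 * π := by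
    rw [norm_mul, Complex.norm_of_nonneg hπ.le, Complex.norm_ofNat]
  rw [returnGenDeriv₂, norm_mul, hnorm]
  gcongr
  refine (norm_sub_le _ _).trans ?_
  rw [norm_div, norm_div, norm_pow, norm_pow, norm_pow]
  gcongr
  · exact hK₂ z hz hδz
  · exact hK₁ z hz hδz

theorem tendsto_returnGenDeriv₂_mul_cpow (h : IsStableSymbol φ α cp cm) :
    Tendsto (fun z => returnGenDeriv₂ φ z * (1 - z) ^ ((1 + 1 / α : ℝ) : ℂ))
      (𝓝[Metric.ball 0 1] 1)
      (𝓝 (2 * π * (1 - 1 / α) * (1 / α) / stableResolventConst α cp cm 0)) := by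
  have hC := h.stableResolventConst_zero_ne_zero
  have hα : (α : ℂ) ≠ 0 := Complex.ofReal_ne_zero.2 h.alpha_pos.ne'
  have hlim := h.tendsto_resolventIntegral_mul_cpow
  have hcomb := (((hlim 2).div ((hlim 0).pow 2) (pow_ne_zero 2 hC)).sub
    (((hlim 1).pow 2).div ((hlim 0).pow 3) (pow_ne_zero 3 hC))).const_mul (4 * π : ℂ)
  convert hcomb.congr' ?_ using 2
  · rw [stableResolventConst_succ h.one_lt _ _ 1, stableResolventConst_succ h.one_lt _ _ 0]
    push_cast
    field_simp
    ring
  filter_upwards [eventually_mem_nhdsWithin] with z hz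
  have hz' := mem_ball_zero_iff.1 hz
  have hw : 1 - z ≠ 0 := norm_pos_iff.1 (norm_one_sub_pos hz')
  have hU := resolventIntegral_zero_ne_zero h.continuous (fun _ => h.norm_le_one) hz'
  have hcpow : (1 - z) ^ (1 / α : ℂ) ≠ 0 := (Complex.cpow_ne_zero_iff_of_exponent_ne_zero
    (one_div_ne_zero hα)).2 hw
  have hk : ∀ k : ℕ, (1 - z) ^ ((k + 1 : ℂ) - 1 / α) =
      (1 - z) ^ (k + 1) / (1 - z) ^ (1 / α : ℂ) := fun k => by
    rw [Complex.cpow_sub _ _ hw, ← Nat.cast_succ, Complex.cpow_natCast]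
  have hexp : (1 - z) ^ ((1 + 1 / α : ℝ) : ℂ) = (1 - z) * (1 - z) ^ (1 / α : ℂ) := by
    push_cast
    rw [Complex.cpow_add _ _ hw, Complex.cpow_one]
  simp only [Pi.div_apply, hk, hexp, returnGenDeriv₂]
  field_simp
  ring

theorem tendsto_coeff_returnGen_div_rpow (h : IsStableSymbol φ α cp cm) {f : ℕ → ℂ}
    (hf : ∀ z, ‖z‖ < 1 →
      HasSum (fun n => f n * z ^ n) (1 - 2 * π / resolventIntegral φ 0 z)) :
    Tendsto (fun n : ℕ => f n / ((n : ℝ) ^ (-2 + 1 / α) : ℝ)) atTop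
      (𝓝 (2 * π * (1 - 1 / α) * (1 / α) / stableResolventConst α cp cm 0 /
        Real.Gamma (1 + 1 / α))) := by
  have hφ := h.continuous
  have hle : ∀ θ, |θ| ≤ π → ‖φ θ‖ ≤ 1 := fun _ => h.norm_le_one
  have hderiv : ∀ z : ℂ, ‖z‖ < 1 → HasSum (fun n : ℕ => ((n + 1 : ℂ) * f (n + 1)) * z ^ n)
      (2 * π * (resolventIntegral φ 1 z / resolventIntegral φ 0 z ^ 2)) := fun z hz =>
    hasSum_deriv_of_hasSum hf
      (fun z hz => hasDerivAt_one_sub_div_resolventIntegral hφ hle hz) hz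
  have hderiv₂ := fun (z : ℂ) (hz : ‖z‖ < 1) => hasSum_deriv_of_hasSum hderiv
    (fun z hz => hasDerivAt_returnGenDeriv₂ hφ hle hz) hz
  have hcoeff := tendsto_coeff_div_rpow (a := 1 + 1 / α)
    (lt_add_of_pos_right 1 (one_div_pos.2 h.alpha_pos)) hderiv₂
    h.tendsto_returnGenDeriv₂_mul_cpow fun δ hδ => h.exists_norm_returnGenDeriv₂_le hδ
  rw [add_sub_cancel_left] at hcoeff
  have hexp : 1 / α - 1 - 1 = -2 + 1 / α := by ring
  rw [← hexp]
  exact tendsto_div_rpow_sub_one (tendsto_div_rpow_sub_one hcoeff)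

end IsStableSymbol

/-- The constant `κ_{α,γ}` of the first-return asymptotics. -/
noncomputable def firstReturnConst (α γ : ℝ) : ℝ :=
  (α - 1) * Real.sin (π / α) / (Real.Gamma (1 / α) * Real.sin (π * (α - γ) / (2 * α)))

section Constants

variable {α γ c t : ℝ}

theorem ofReal_mul_exp_cpow (hc : 0 < c) (ht : |t| < π) (r : ℝ) :
    ((c : ℂ) * Complex.exp (t * Complex.I)) ^ (r : ℂ) =
      (c ^ r : ℝ) * Complex.exp ((r * t : ℝ) * Complex.I) := by
  have hc' : (c : ℂ) ≠ 0 := Complex.ofReal_ne_zero.2 hc.ne'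
  obtain ⟨hlower, hupper⟩ := abs_lt.1 ht
  rw [Complex.cpow_def_of_ne_zero (mul_ne_zero hc' (Complex.exp_ne_zero _)),
    Complex.log_ofReal_mul hc (Complex.exp_ne_zero _),
    Complex.log_exp (by simpa using hlower) (by simpa using hupper.le),
    Real.rpow_def_of_pos hc, Complex.ofReal_exp, ← Complex.exp_add]
  congr 1
  push_cast
  ring

theorem stableResolventConst_zero_conj (hc : 0 < c) (ht : |t| < π) :
    stableResolventConst α (c * Complex.exp (t * Complex.I))
      (c * Complex.exp (-(t * Complex.I))) 0 =
      (Real.Gamma (1 / α + 1) * Real.Gamma (1 - 1 / α) *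
        (c ^ (-(1 / α)) * (2 * Real.cos (t / α))) : ℝ) := by
  have hright := ofReal_mul_exp_cpow hc ht (-(1 / α))
  have hleft := ofReal_mul_exp_cpow hc ((abs_neg t).trans_lt ht) (-(1 / α))
  have hcos : (c * Complex.exp (t * Complex.I)) ^ (-(1 / α) : ℂ) +
      (c * Complex.exp (-(t * Complex.I))) ^ (-(1 / α) : ℂ) =
      (c ^ (-(1 / α)) * (2 * Real.cos (t / α)) : ℝ) := by
    rw [Complex.ofReal_neg t, neg_mul] at hleft
    have hexp : (-(1 / α : ℂ)) = ((-(1 / α) : ℝ) : ℂ) := by push_cast; rfl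
    rw [hexp, hright, hleft]
    push_cast
    rw [Complex.two_cos, ← mul_add, add_comm]
    congr 4 <;> ring
  rw [stableResolventConst, hcos]
  push_cast [← Complex.Gamma_ofReal]
  simp

theorem two_pi_mul_div_Gamma_eq_firstReturnConst_mul (hα : 1 < α) (hc : 0 < c) :
    2 * π * (1 - 1 / α) * (1 / α) /
        (Real.Gamma (1 / α + 1) * Real.Gamma (1 - 1 / α) *
          (c ^ (-(1 / α)) * (2 * Real.cos (π * γ / 2 / α)))) / Real.Gamma (1 + 1 / α) =
      firstReturnConst α γ * c ^ (1 / α) := by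
  have hα₀ : 0 < α := one_pos.trans hα
  have hs : 0 < 1 / α := one_div_pos.2 hα₀
  have hsin : 0 < Real.sin (π / α) :=
    Real.sin_pos_of_pos_of_lt_pi (by positivity) (div_lt_self Real.pi_pos hα)
  have hΓ : 0 < Real.Gamma (1 / α) := Real.Gamma_pos_of_pos hs
  have hreflection : Real.Gamma (1 - 1 / α) = π / Real.sin (π / α) / Real.Gamma (1 / α) := by
    rw [eq_div_iff hΓ.ne', mul_comm, Real.Gamma_mul_Gamma_one_sub, mul_one_div]
  have hcofunction : Real.sin (π * (α - γ) / (2 * α)) = Real.cos (π * γ / 2 / α) := by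
    rw [← Real.sin_pi_div_two_sub]
    congr 1
    field_simp
  have hc' : 0 < c ^ (1 / α) := Real.rpow_pos_of_pos hc _
  rw [firstReturnConst, hcofunction, hreflection, add_comm 1 (1 / α), Real.Gamma_add_one hs.ne',
    Real.rpow_neg hc.le]
  generalize Real.Gamma (1 / α) = Γ at *
  generalize c ^ (1 / α) = C at *
  field_simp

theorem firstReturnConst_pos (hα : 1 < α) (hγ : |γ| < 1) : 0 < firstReturnConst α γ := by
  have hπ := Real.pi_pos
  have hα₀ : 0 < α := one_pos.trans hα
  obtain ⟨hγ₁, hγ₂⟩ := abs_lt.1 hγ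
  have : 0 < α - 1 := sub_pos.2 hα
  have : 0 < Real.Gamma (1 / α) := Real.Gamma_pos_of_pos (one_div_pos.2 hα₀)
  have : 0 < Real.sin (π / α) :=
    Real.sin_pos_of_pos_of_lt_pi (by positivity) (div_lt_self hπ hα)
  have : 0 < Real.sin (π * (α - γ) / (2 * α)) := by
    refine Real.sin_pos_of_pos_of_lt_pi
      (div_pos (mul_pos hπ (by linarith)) (by positivity)) ?_
    rw [mul_div_assoc]
    exact mul_lt_of_lt_one_right hπ ((div_lt_one (by positivity)).2 (by linarith))
  rw [firstReturnConst]
  positivity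

theorem abs_pi_mul_div_two_lt (hγ : |γ| < 1) : |π * γ / 2| < π / 2 := by
  rw [abs_div, abs_mul, abs_of_pos Real.pi_pos, abs_two]
  gcongr
  exact mul_lt_of_lt_one_right Real.pi_pos hγ

theorem I_mul_pi_mul_div_two (γ : ℝ) :
    Complex.I * π * γ / 2 = ((π * γ / 2 : ℝ) : ℂ) * Complex.I := by
  push_cast
  ring

end Constants

theorem isEquivalent_const_mul_of_tendsto_div {ι 𝕜 : Type*} [NormedField 𝕜] {l : Filter ι}
    {f g : ι → 𝕜} {c : 𝕜} (hc : c ≠ 0) (hg : ∀ᶠ i in l, g i ≠ 0)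
    (hfg : Tendsto (fun i => f i / g i) l (𝓝 c)) : f ~[l] fun i => c * g i :=
  (((isEquivalent_const_iff_tendsto hc).2 hfg).mul IsEquivalent.refl).congr_left
    (hg.mono fun _ hi => div_mul_cancel₀ _ hi)

theorem isStableSymbol_rwChar {p : ℤ → ℝ} {α t c : ℝ} (hα : 1 < α) (ht : |t| < π / 2)
    (hc : 0 < c) (hp₀ : ∀ x, 0 ≤ p x) (hp₁ : HasSum p 1)
    (hap : ∃ n x, 0 < pn p n x ∧ 0 < pn p n (x + 1))
    (hpos : Tendsto (fun θ : ℝ => (1 - rwChar p θ) / ((|θ| ^ α : ℝ) : ℂ)) (𝓝[>] 0)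
      (𝓝 (c * Complex.exp (t * Complex.I))))
    (hneg : Tendsto (fun θ : ℝ => (1 - rwChar p θ) / ((|θ| ^ α : ℝ) : ℂ)) (𝓝[<] 0)
      (𝓝 (c * Complex.exp (-(t * Complex.I))))) :
    IsStableSymbol (rwChar p) α (c * Complex.exp (t * Complex.I))
      (c * Complex.exp (-(t * Complex.I))) where
  continuous := continuous_rwChar hp₁.summable
  apply_zero := by exact_mod_cast rwChar_zero hp₁
  norm_lt_one _ hθ hθ₀ := norm_rwChar_lt_one hp₀ hp₁ hap hθ hθ₀
  one_lt := hα
  re_pos_right := by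
    rw [Complex.re_ofReal_mul, Complex.exp_ofReal_mul_I_re]
    exact mul_pos hc (Real.cos_pos_of_mem_Ioo (abs_lt.1 ht))
  re_pos_left := by
    rw [Complex.re_ofReal_mul, ← neg_mul, ← Complex.ofReal_neg, Complex.exp_ofReal_mul_I_re,
      Real.cos_neg]
    exact mul_pos hc (Real.cos_pos_of_mem_Ioo (abs_lt.1 ht))
  tendsto_right := hpos
  tendsto_left := hneg

theorem stmt19_general (p : ℤ → ℝ) (α γ c₀ : ℝ) (hα : 1 < α) (hγ : |γ| < 1) (hc₀ : 0 < c₀)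
    (hp0 : ∀ x, 0 ≤ p x) (hp1 : HasSum p 1)
    (hap : ∃ n x, 0 < pn p n x ∧ 0 < pn p n (x + 1))
    (hpos : Tendsto (fun θ : ℝ => (1 - rwChar p θ) / ((|θ| ^ α : ℝ) : ℂ)) (𝓝[>] 0)
      (𝓝 ((c₀ : ℂ) * Complex.exp (Complex.I * Real.pi * γ / 2))))
    (hneg : Tendsto (fun θ : ℝ => (1 - rwChar p θ) / ((|θ| ^ α : ℝ) : ℂ)) (𝓝[<] 0)
      (𝓝 ((c₀ : ℂ) * Complex.exp (-(Complex.I * Real.pi * γ / 2))))) :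
    (fun n : ℕ => firstReturn p n) ~[atTop]
      (fun n : ℕ =>
        ((α - 1) * Real.sin (Real.pi / α) /
            (Real.Gamma (1 / α) * Real.sin (Real.pi * (α - γ) / (2 * α)))) *
          c₀ ^ (1 / α) * (n : ℝ) ^ (-2 + 1 / α)) := by
  have ht := abs_pi_mul_div_two_lt hγ
  rw [I_mul_pi_mul_div_two] at hpos hneg
  have h := isStableSymbol_rwChar hα ht hc₀ hp0 hp1 hap hpos hneg
  have hlim := h.tendsto_coeff_returnGen_div_rpow fun z => hasSum_firstReturn_mul_pow hp0 hp1
  rw [stableResolventConst_zero_conj hc₀ (ht.trans (half_lt_self Real.pi_pos))] at hlim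
  have hreal : Tendsto (fun n : ℕ => firstReturn p n / (n : ℝ) ^ (-2 + 1 / α)) atTop
      (𝓝 (firstReturnConst α γ * c₀ ^ (1 / α))) := by
    rw [← two_pi_mul_div_Gamma_eq_firstReturnConst_mul hα hc₀]
    refine tendsto_ofReal_iff.1 ?_
    exact_mod_cast hlim
  have hconst : firstReturnConst α γ * c₀ ^ (1 / α) ≠ 0 :=
    (mul_pos (firstReturnConst_pos hα hγ) (Real.rpow_pos_of_pos hc₀ _)).ne'
  refine isEquivalent_const_mul_of_tendsto_div hconst ?_ hreal
  filter_upwards [eventually_gt_atTop 0] with n hn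
  exact (Real.rpow_pos_of_pos (Nat.cast_pos.2 hn) _).ne'

/-- Theorem 1: for a recurrent strongly aperiodic random walk on `ℤ` with
`1 − φ(θ) ~ c₀ e^{±iπγ/2} |θ|^α` as `θ → ±0` (`1 < α < 2`, `|γ| ≤ 2−α`),
`f⁰(n) ~ κ_{α,γ} c₀^{1/α} n^{−2+1/α}` with
`κ_{α,γ} = (α−1) sin(π/α) / (Γ(1/α) sin(π(α−γ)/(2α)))`. -/
theorem stmt19 (p : ℤ → ℝ) (α γ c₀ : ℝ)
    (hα : 1 < α) (hα2 : α < 2) (hγ : |γ| ≤ 2 - α) (hc₀ : 0 < c₀)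
    (hp0 : ∀ x, 0 ≤ p x) (hp1 : HasSum p 1)
    (hrec : ¬ Summable (fun n => pn p n 0))
    (hap : ∀ x : ℤ, ∀ᶠ n in atTop, 0 < pn p n x)
    (hpos : Tendsto (fun θ : ℝ => (1 - rwChar p θ) / ((|θ| ^ α : ℝ) : ℂ)) (𝓝[>] 0)
      (𝓝 ((c₀ : ℂ) * Complex.exp (Complex.I * Real.pi * γ / 2))))
    (hneg : Tendsto (fun θ : ℝ => (1 - rwChar p θ) / ((|θ| ^ α : ℝ) : ℂ)) (𝓝[<] 0)
      (𝓝 ((c₀ : ℂ) * Complex.exp (-(Complex.I * Real.pi * γ / 2))))) :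
    (fun n : ℕ => firstReturn p n) ~[atTop]
      (fun n : ℕ =>
        ((α - 1) * Real.sin (Real.pi / α) /
            (Real.Gamma (1 / α) * Real.sin (Real.pi * (α - γ) / (2 * α)))) *
          c₀ ^ (1 / α) * (n : ℝ) ^ (-2 + 1 / α)) := by
  obtain ⟨n, hn₀, hn₁⟩ := ((hap 0).and (hap 1)).exists
  exact stmt19_general p α γ c₀ hα (by linarith) hc₀ hp0 hp1 ⟨n, 0, hn₀, hn₁⟩ hpos hneg
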